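/- arXiv:1902.10564 — 3 statements merged into one kernel-verified Lean document; each statement's English description precedes it below -/
import Mathlib

section
/- Let K be a Cantor set in ℝ and let G be a finitely generated subgroup of diff^{1+Lip}(K). Then at least one of the following holds: (1) some element g of G has a hyperbolic fixed point in K; (2) every minimal invariant set for the action of G on K is a finite subset of K. -/
open Set

/-- `K` is a Cantor set in `ℝ`: nonempty, compact, totally disconnected, perfect. -/
def IsCantorInR (K : Set ℝ) : Prop :=
  K.Nonempty ∧ IsCompact K ∧ IsTotallyDisconnected K ∧ Perfect K

open Classical in
/-- Apply a permutation of `K` to a real number (identity outside `K`). -/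
noncomputable def apK (K : Set ℝ) (f : Equiv.Perm K) (y : ℝ) : ℝ :=
  if h : y ∈ K then (f ⟨y, h⟩ : ℝ) else y

/-- `f` locally coincides with a `C¹` embedding of an open interval with
nowhere-vanishing derivative. -/
def IsD1 (K : Set ℝ) (f : Equiv.Perm K) : Prop :=
  ∀ x : K, ∃ a b : ℝ, (x : ℝ) ∈ Set.Ioo a b ∧
    ∃ F F' : ℝ → ℝ,
      (∀ y ∈ Set.Ioo a b, HasDerivAt F (F' y) y ∧ F' y ≠ 0) ∧
      ContinuousOn F' (Set.Ioo a b) ∧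
      Set.InjOn F (Set.Ioo a b) ∧
      (∀ y : ℝ, y ∈ Set.Ioo a b → y ∈ K → F y = apK K f y)

/-- `f` locally coincides with a `C¹` embedding of an open interval with
nowhere-vanishing derivative whose log-derivative is Lipschitz. -/
def IsD1Lip (K : Set ℝ) (f : Equiv.Perm K) : Prop :=
  ∀ x : K, ∃ a b : ℝ, (x : ℝ) ∈ Set.Ioo a b ∧
    ∃ F F' : ℝ → ℝ,
      (∀ y ∈ Set.Ioo a b, HasDerivAt F (F' y) y ∧ F' y ≠ 0) ∧
      ContinuousOn F' (Set.Ioo a b) ∧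
      Set.InjOn F (Set.Ioo a b) ∧
      (∃ C : NNReal, LipschitzOnWith C (fun y => Real.log |F' y|) (Set.Ioo a b)) ∧
      (∀ y : ℝ, y ∈ Set.Ioo a b → y ∈ K → F y = apK K f y)

/-- membership in `diff¹(K)`: a homeomorphism of `K` locally coinciding
with `C¹` diffeomorphisms of intervals of `ℝ`. -/
def MemDiff1 (K : Set ℝ) (f : Equiv.Perm K) : Prop :=
  Continuous (fun x : K => f x) ∧ Continuous (fun x : K => f.symm x) ∧ IsD1 K f

/-- membership in `diff^{1+Lip}(K)`. -/
def MemDiffLip (K : Set ℝ) (f : Equiv.Perm K) : Prop :=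
  Continuous (fun x : K => f x) ∧ Continuous (fun x : K => f.symm x) ∧ IsD1Lip K f

/-- The derivative of `f` at `x`, as a limit of difference quotients within `K`. -/
def HasDerivOnK (K : Set ℝ) (f : Equiv.Perm K) (x d : ℝ) : Prop :=
  Filter.Tendsto (fun y : ℝ => (apK K f y - apK K f x) / (y - x))
    (nhdsWithin x (K \ {x})) (nhds d)

/-- `f` is increasing on the interval `I`: it coincides on `I ∩ K` with an
increasing `C¹` diffeomorphism of `I` onto an interval of `ℝ`. -/
def IncreasingOnK (K : Set ℝ) (f : Equiv.Perm K) (I : Set ℝ) : Prop :=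
  ∃ F F' : ℝ → ℝ,
    StrictMonoOn F I ∧
    (∀ y ∈ I, HasDerivWithinAt F (F' y) I y ∧ 0 < F' y) ∧
    ContinuousOn F' I ∧
    (∀ y ∈ I, y ∈ K → F y = apK K f y)

/-- `A` is invariant under the subgroup `G`. -/
def IsInvariantSet (K : Set ℝ) (G : Subgroup (Equiv.Perm K)) (A : Set ℝ) : Prop :=
  ∀ g ∈ G, ∀ x ∈ A, apK K g x ∈ A

/-- `A` is a minimal invariant set for the action of `G` on `K`. -/
def IsMinimalInvariantSet (K : Set ℝ) (G : Subgroup (Equiv.Perm K)) (A : Set ℝ) : Prop :=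
  A.Nonempty ∧ A ⊆ K ∧ IsClosed A ∧ IsInvariantSet K G A ∧
    ∀ B : Set ℝ, B.Nonempty → B ⊆ A → IsClosed B → IsInvariantSet K G B → B = A

/-- The set of points of `K` fixed by every element of `H`. -/
def fixedSet (K : Set ℝ) (H : Subgroup (Equiv.Perm K)) : Set ℝ :=
  {x | x ∈ K ∧ ∀ g ∈ H, apK K g x = x}

/-- `a, b` generate a free subsemigroup: distinct nonempty positive words in
`a` and `b` define distinct elements. -/
def IsFreePair {M : Type*} [Monoid M] (a b : M) : Prop :=
  ∀ w₁ w₂ : List Bool, w₁ ≠ [] → w₂ ≠ [] →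
    (w₁.map (fun t => if t then a else b)).prod = (w₂.map (fun t => if t then a else b)).prod →
    w₁ = w₂

/-- `G` contains no free subsemigroup on two generators. -/
def HasNoFreeSubsemigroup {Γ : Type*} [Group Γ] (G : Subgroup Γ) : Prop :=
  ¬ ∃ a ∈ G, ∃ b ∈ G, IsFreePair a b

/-- `p` is accumulated on the left by `A`. -/
def AccLeft (p : ℝ) (A : Set ℝ) : Prop := ∀ α > 0, (Set.Ico (p - α) p ∩ A).Nonempty

/-- `p` is accumulated on the right by `A`. -/
def AccRight (p : ℝ) (A : Set ℝ) : Prop := ∀ α > 0, (Set.Ioc p (p + α) ∩ A).Nonempty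


section Action

variable {K : Set ℝ}

theorem apK_of_mem (f : Equiv.Perm K) {x : ℝ} (hx : x ∈ K) : apK K f x = f ⟨x, hx⟩ :=
  dif_pos hx

theorem apK_mem (f : Equiv.Perm K) {x : ℝ} (hx : x ∈ K) : apK K f x ∈ K := by
  rw [apK_of_mem f hx]
  exact (f ⟨x, hx⟩).2

@[simp]
theorem apK_one (x : ℝ) : apK K 1 x = x := by
  by_cases hx : x ∈ K <;> simp [apK, hx]

theorem apK_mul (f g : Equiv.Perm K) (x : ℝ) : apK K (f * g) x = apK K f (apK K g x) := by
  by_cases hx : x ∈ K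
  · rw [apK_of_mem f (apK_mem g hx), apK_of_mem _ hx]
    simp [apK_of_mem g hx]
  · simp [apK, hx]

@[simp]
theorem apK_inv_apK (f : Equiv.Perm K) (x : ℝ) : apK K f⁻¹ (apK K f x) = x := by
  rw [← apK_mul, inv_mul_cancel, apK_one]

theorem apK_injective (f : Equiv.Perm K) : Function.Injective (apK K f) :=
  Function.LeftInverse.injective (apK_inv_apK f)

theorem continuousOn_apK {f : Equiv.Perm K} (hf : Continuous fun x : K => f x) :
    ContinuousOn (apK K f) K := by
  rw [continuousOn_iff_continuous_domRestrict]
  convert continuous_subtype_val.comp hf using 1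
  ext x
  simp [apK_of_mem f x.2]

/-- A set stable under a generating set and its inverses is stable under the group. -/
theorem apK_mem_of_mem_closure {S : Set (Equiv.Perm K)} {P : Set ℝ}
    (hP : ∀ s ∈ S, ∀ x ∈ P, apK K s x ∈ P ∧ apK K s⁻¹ x ∈ P)
    {g : Equiv.Perm K} (hg : g ∈ Subgroup.closure S) {x : ℝ} (hx : x ∈ P) : apK K g x ∈ P := by
  suffices h : ∀ x ∈ P, apK K g x ∈ P ∧ apK K g⁻¹ x ∈ P from (h x hx).1
  clear hx x
  induction hg using Subgroup.closure_induction with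
  | mem s hs => exact hP s hs
  | one => simp
  | mul a b _ _ iha ihb =>
    intro x hx
    rw [mul_inv_rev, apK_mul, apK_mul]
    exact ⟨(iha _ (ihb x hx).1).1, (ihb _ (iha x hx).2).2⟩
  | inv a _ iha =>
    intro x hx
    rw [inv_inv]
    exact (iha x hx).symm

end Action

section Extension

variable {K : Set ℝ}

/-- `F` is a differentiable embedding of `U` with derivative `F'` and `C`-Lipschitz
logarithmic derivative which extends `g` on `U ∩ K`. -/
structure IsLipExtensionOn (K : Set ℝ) (g : Equiv.Perm K) (C : ℝ) (U : Set ℝ)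
    (F F' : ℝ → ℝ) : Prop where
  hasDerivAt : ∀ y ∈ U, HasDerivAt F (F' y) y
  ne_zero : ∀ y ∈ U, F' y ≠ 0
  injOn : InjOn F U
  log_le : ∀ y ∈ U, ∀ z ∈ U, Real.log |F' y| - Real.log |F' z| ≤ C * |y - z|
  eq_apK : ∀ y ∈ U, y ∈ K → F y = apK K g y

/-- `g` has extensions with constant `C` on all balls of radius `δ` centered in `T`. -/
def HasLipExtensions (K : Set ℝ) (g : Equiv.Perm K) (C δ : ℝ) (T : Set ℝ) : Prop :=
  ∀ x ∈ T, ∃ F F' : ℝ → ℝ, IsLipExtensionOn K g C (Metric.ball x δ) F F'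

theorem IsLipExtensionOn.mono {g : Equiv.Perm K} {C C' : ℝ} {U U' : Set ℝ} {F F' : ℝ → ℝ}
    (h : IsLipExtensionOn K g C U F F') (hC : C ≤ C') (hU : U' ⊆ U) :
    IsLipExtensionOn K g C' U' F F' where
  hasDerivAt y hy := h.hasDerivAt y (hU hy)
  ne_zero y hy := h.ne_zero y (hU hy)
  injOn := h.injOn.mono hU
  log_le y hy z hz := (h.log_le y (hU hy) z (hU hz)).trans (by gcongr)
  eq_apK y hy := h.eq_apK y (hU hy)

theorem HasLipExtensions.mono {g : Equiv.Perm K} {C C' δ δ' : ℝ} {T T' : Set ℝ}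
    (h : HasLipExtensions K g C δ T) (hC : C ≤ C') (hδ : δ' ≤ δ) (hT : T' ⊆ T) :
    HasLipExtensions K g C' δ' T' := fun x hx =>
  let ⟨F, F', hF⟩ := h x (hT hx)
  ⟨F, F', hF.mono hC (Metric.ball_subset_ball hδ)⟩

theorem IsLipExtensionOn.strictMonoOn_or_strictAntiOn {g : Equiv.Perm K} {C x δ : ℝ}
    {F F' : ℝ → ℝ} (h : IsLipExtensionOn K g C (Metric.ball x δ) F F') (hδ : 0 < δ) :
    StrictMonoOn F (Metric.ball x δ) ∨ StrictAntiOn F (Metric.ball x δ) := by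
  have hc : ContinuousOn F (Metric.ball x δ) :=
    fun y hy => (h.hasDerivAt y hy).continuousAt.continuousWithinAt
  have hi := h.injOn
  rw [Real.ball_eq_Ioo] at hc hi ⊢
  exact hc.strictMonoOn_of_injOn_Ioo (by linarith) hi

theorem IsD1Lip.exists_hasLipExtensions {g : Equiv.Perm K} (hg : IsD1Lip K g)
    (hK : IsCompact K) : ∃ C δ, 0 ≤ C ∧ 0 < δ ∧ HasLipExtensions K g C δ K := by
  suffices h : ∃ C δ, 0 ≤ C ∧ 0 < δ ∧ HasLipExtensions K g C δ (K ∩ K) by simpa using h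
  refine hK.induction_on (p := fun T => ∃ C δ, 0 ≤ C ∧ 0 < δ ∧ HasLipExtensions K g C δ (T ∩ K))
    ⟨0, 1, le_rfl, one_pos, fun x hx => hx.1.elim⟩ ?_ ?_ ?_
  · rintro S T hST ⟨C, δ, hC, hδ, h⟩
    exact ⟨C, δ, hC, hδ, h.mono le_rfl le_rfl (inter_subset_inter_left _ hST)⟩
  · rintro S T ⟨C, δ, hC, hδ, h⟩ ⟨C', δ', hC', hδ', h'⟩
    refine ⟨max C C', min δ δ', le_max_of_le_left hC, lt_min hδ hδ', ?_⟩
    rintro x ⟨hx | hx, hxK⟩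
    · exact h.mono (le_max_left _ _) (min_le_left _ _) subset_rfl x ⟨hx, hxK⟩
    · exact h'.mono (le_max_right _ _) (min_le_right _ _) subset_rfl x ⟨hx, hxK⟩
  · intro x hx
    obtain ⟨a, b, hab, F, F', hF, -, hinj, ⟨C, hC⟩, heq⟩ := hg ⟨x, hx⟩
    obtain ⟨ε, hε, hball⟩ := Metric.isOpen_iff.1 isOpen_Ioo x hab
    refine ⟨_, mem_nhdsWithin_of_mem_nhds (Metric.ball_mem_nhds x (half_pos hε)),
      C, ε / 2, C.2, half_pos hε, ?_⟩
    rintro y ⟨hy, -⟩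
    have hsub : Metric.ball y (ε / 2) ⊆ Ioo a b := by
      refine (Metric.ball_subset_ball' ?_).trans hball
      linarith [Metric.mem_ball.1 hy]
    refine ⟨F, F', IsLipExtensionOn.mono (U := Ioo a b)
      ⟨fun z hz => (hF z hz).1, fun z hz => (hF z hz).2, hinj, fun z hz w hw => ?_, heq⟩
      le_rfl hsub⟩
    have := hC.dist_le_mul z hz w hw
    rw [Real.dist_eq, Real.dist_eq] at this
    exact (le_abs_self _).trans this

theorem exists_uniform_hasLipExtensions {S : Set (Equiv.Perm K)} (hS : S.Finite)
    (hSK : ∀ s ∈ S, IsD1Lip K s) (hK : IsCompact K) :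
    ∃ C δ, 0 ≤ C ∧ 0 < δ ∧ ∀ s ∈ S, HasLipExtensions K s C δ K := by
  induction S, hS using Set.Finite.induction_on with
  | empty => exact ⟨0, 1, le_rfl, one_pos, by simp⟩
  | @insert g S _ _ ih =>
    obtain ⟨C, δ, hC, hδ, h⟩ := ih fun s hs => hSK s (mem_insert_of_mem _ hs)
    obtain ⟨C', δ', hC', hδ', h'⟩ := (hSK g (mem_insert _ _)).exists_hasLipExtensions hK
    refine ⟨max C C', min δ δ', le_max_of_le_left hC, lt_min hδ hδ', ?_⟩
    rintro s (rfl | hs)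
    · exact h'.mono (le_max_right _ _) (min_le_right _ _) subset_rfl
    · exact (h s hs).mono (le_max_left _ _) (min_le_left _ _) subset_rfl

theorem exists_uniform_modulus {S : Set (Equiv.Perm K)} (hS : S.Finite)
    (hSK : ∀ s ∈ S, Continuous fun x : K => s x) (hK : IsCompact K) {ε : ℝ} (hε : 0 < ε) :
    ∃ δ > 0, ∀ s ∈ S, ∀ x ∈ K, ∀ y ∈ K, |y - x| < δ → |apK K s y - apK K s x| < ε := by
  induction S, hS using Set.Finite.induction_on with
  | empty => exact ⟨1, one_pos, by simp⟩
  | @insert g S _ _ ih =>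
    obtain ⟨δ, hδ, h⟩ := ih fun s hs => hSK s (mem_insert_of_mem _ hs)
    obtain ⟨δ', hδ', h'⟩ := Metric.uniformContinuousOn_iff.1
      (hK.uniformContinuousOn_of_continuous (continuousOn_apK (hSK g (mem_insert _ _)))) ε hε
    refine ⟨min δ δ', lt_min hδ hδ', ?_⟩
    rintro s (rfl | hs) x hx y hy hxy
    · exact h' y hy x hx (hxy.trans_le (min_le_right _ _))
    · exact h s hs x hx y hy (hxy.trans_le (min_le_left _ _))

/-- Along the chord from `x` to `y`, the derivative of an extension is comparable to the
ratio of the lengths of the chord and of its image. -/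
theorem IsLipExtensionOn.abs_deriv_le {g : Equiv.Perm K} {C δ x y z : ℝ} {F F' : ℝ → ℝ}
    (h : IsLipExtensionOn K g C (Metric.ball x δ) F F') (hC : 0 ≤ C) (hne : x ≠ y)
    (hy : |y - x| < δ) (hz : |z - x| ≤ |y - x|) :
    |F' z| ≤ |F y - F x| / |y - x| * Real.exp (2 * C * |y - x|) := by
  have hmem : ∀ w, |w - x| ≤ |y - x| → w ∈ Metric.ball x δ := fun w hw => by
    rw [Metric.mem_ball, Real.dist_eq]
    exact hw.trans_lt hy
  obtain ⟨c, hc, hslope⟩ : ∃ c, |c - x| ≤ |y - x| ∧ |F' c| = |F y - F x| / |y - x| := by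
    have key : ∀ a b, a < b → (∀ w ∈ Icc a b, |w - x| ≤ |y - x|) →
        |F b - F a| / |b - a| = |F y - F x| / |y - x| →
        ∃ c, |c - x| ≤ |y - x| ∧ |F' c| = |F y - F x| / |y - x| := by
      intro a b hab hsub heq
      obtain ⟨c, hc, hslope⟩ := exists_hasDerivAt_eq_slope F F' hab
        (fun w hw => (h.hasDerivAt w (hmem w (hsub w hw))).continuousAt.continuousWithinAt)
        (fun w hw => h.hasDerivAt w (hmem w (hsub w (Ioo_subset_Icc_self hw))))
      exact ⟨c, hsub c (Ioo_subset_Icc_self hc), by rw [hslope, abs_div, heq]⟩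
    rcases lt_or_gt_of_ne hne with hlt | hlt
    · refine key x y hlt (fun w hw => ?_) rfl
      rw [abs_of_nonneg (by linarith [hw.1]), abs_of_pos (by linarith)]
      linarith [hw.2]
    · refine key y x hlt (fun w hw => ?_) (by rw [abs_sub_comm, abs_sub_comm x])
      rw [abs_of_nonpos (by linarith [hw.2]), abs_of_neg (by linarith)]
      linarith [hw.1]
  have hlog := h.log_le z (hmem z hz) c (hmem c hc)
  have hzc : |z - c| ≤ 2 * |y - x| := by
    have := abs_sub_le z x c
    rw [abs_sub_comm x c] at this
    linarith
  have hF'z := abs_pos.2 (h.ne_zero z (hmem z hz))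
  have hF'c := abs_pos.2 (h.ne_zero c (hmem c hc))
  rw [← hslope, ← Real.log_le_log_iff hF'z (by positivity),
    Real.log_mul hF'c.ne' (Real.exp_ne_zero _), Real.log_exp]
  nlinarith

/-- Bounded distortion along an orbit of short intervals of bounded total length. -/
theorem exists_extension_of_orbit {G : Subgroup (Equiv.Perm K)} {C δ L : ℝ} (hC : 0 ≤ C)
    {x y : ℕ → ℝ} {s : ℕ → Equiv.Perm K} {n : ℕ}
    (hxK : ∀ i ≤ n, x i ∈ K) (hyK : ∀ i ≤ n, y i ∈ K) (hne : ∀ i ≤ n, x i ≠ y i)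
    (hlt : ∀ i ≤ n, |y i - x i| < δ) (hsG : ∀ i < n, s i ∈ G)
    (hext : ∀ i < n, HasLipExtensions K (s i) C δ K)
    (hx : ∀ i < n, apK K (s i) (x i) = x (i + 1)) (hy : ∀ i < n, apK K (s i) (y i) = y (i + 1))
    (hL : ∑ i ∈ Finset.range n, |y i - x i| ≤ L) :
    ∃ g ∈ G, apK K g (x 0) = x n ∧ ∃ Φ Φ' : ℝ → ℝ,
      ∀ z ∈ Metric.ball (x 0) (|y 0 - x 0| * Real.exp (-(2 * C * L))),
        HasDerivAt Φ (Φ' z) z ∧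
        |Φ' z| ≤ |y n - x n| / |y 0 - x 0| * Real.exp (2 * C * L) ∧
        (z ∈ K → Φ z = apK K g z) := by
  set r := |y 0 - x 0| * Real.exp (-(2 * C * L)) with hr
  have hℓ : ∀ i ≤ n, 0 < |y i - x i| := fun i hi => abs_pos.2 (sub_ne_zero.2 (hne i hi).symm)
  have hr0 : 0 < r := mul_pos (hℓ 0 (Nat.zero_le _)) (Real.exp_pos _)
  have hexp : ∀ m ≤ n, Real.exp (2 * C * ∑ i ∈ Finset.range m, |y i - x i|)
      ≤ Real.exp (2 * C * L) := by
    intro m hm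
    gcongr
    refine le_trans (Finset.sum_le_sum_of_subset_of_nonneg ?_ fun _ _ _ => abs_nonneg _) hL
    exact Finset.range_mono hm
  suffices H : ∀ m ≤ n, ∃ g ∈ G, apK K g (x 0) = x m ∧ ∃ Φ Φ' : ℝ → ℝ,
      ∀ z ∈ Metric.ball (x 0) r, HasDerivAt Φ (Φ' z) z ∧
        |Φ' z| ≤ |y m - x m| / |y 0 - x 0| *
          Real.exp (2 * C * ∑ i ∈ Finset.range m, |y i - x i|) ∧
        (z ∈ K → Φ z = apK K g z) by
    obtain ⟨g, hg, hgx, Φ, Φ', hΦ⟩ := H n le_rfl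
    refine ⟨g, hg, hgx, Φ, Φ', fun z hz => ⟨(hΦ z hz).1, (hΦ z hz).2.1.trans ?_, (hΦ z hz).2.2⟩⟩
    gcongr
  intro m
  induction m with
  | zero =>
    intro _
    refine ⟨1, G.one_mem, apK_one _, id, fun _ => 1, fun z _ => ⟨hasDerivAt_id z, ?_, by simp⟩⟩
    simp [div_self (hℓ 0 (Nat.zero_le _)).ne']
  | succ m ih =>
    intro hm
    obtain ⟨g, hg, hgx, Φ, Φ', hΦ⟩ := ih (by lia)
    obtain ⟨F, F', hF⟩ := hext m (by lia) (x m) (hxK m (by lia))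
    have hΦ0 : Φ (x 0) = x m :=
      ((hΦ _ (Metric.mem_ball_self hr0)).2.2 (hxK 0 (Nat.zero_le _))).trans hgx
    have hdist : ∀ z ∈ Metric.ball (x 0) r, |Φ z - x m| ≤ |y m - x m| := by
      intro z hz
      have hmv := (convex_ball (x 0) r).norm_image_sub_le_of_norm_hasDerivWithin_le
        (fun w hw => (hΦ w hw).1.hasDerivWithinAt) (fun w hw => (hΦ w hw).2.1)
        (Metric.mem_ball_self hr0) hz
      rw [hΦ0, Real.norm_eq_abs, Real.norm_eq_abs] at hmv
      have hz' : |z - x 0| ≤ r := (Metric.mem_ball.1 hz).le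
      refine hmv.trans ?_
      calc _ ≤ |y m - x m| / |y 0 - x 0| * Real.exp (2 * C * L) * r := by
            have := hexp m (by lia)
            gcongr
        _ = |y m - x m| := by
            have := (hℓ 0 (Nat.zero_le _)).ne'
            rw [hr, Real.exp_neg]
            field_simp
    refine ⟨s m * g, G.mul_mem (hsG m (by lia)) hg, by rw [apK_mul, hgx, hx m (by lia)],
      F ∘ Φ, fun z => F' (Φ z) * Φ' z, fun z hz => ?_⟩
    obtain ⟨h1, h2, h3⟩ := hΦ z hz
    have hmem : Φ z ∈ Metric.ball (x m) δ := (hdist z hz).trans_lt (hlt m (by lia))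
    refine ⟨(hF.hasDerivAt _ hmem).comp z h1, ?_, fun hzK => ?_⟩
    · have hF' := hF.abs_deriv_le hC (hne m (by lia)) (hlt m (by lia)) (hdist z hz)
      rw [hF.eq_apK (y m) (hlt m (by lia)) (hyK m (by lia)),
        hF.eq_apK (x m) (Metric.mem_ball_self ((abs_nonneg _).trans_lt (hlt m (by lia))))
          (hxK m (by lia)), hx m (by lia), hy m (by lia)] at hF'
      rw [abs_mul, Finset.sum_range_succ, mul_add, Real.exp_add]
      refine (mul_le_mul hF' h2 (abs_nonneg _) (by positivity)).trans_eq ?_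
      have := (hℓ 0 (Nat.zero_le _)).ne'
      have := (hℓ m (by lia)).ne'
      field_simp
    · rw [apK_mul, ← h3 hzK]
      exact hF.eq_apK _ hmem (by rw [h3 hzK]; exact apK_mem g hzK)

end Extension

section Gap

/-- `x` and `y` are the two endpoints, in some order, of a bounded gap of `A`. -/
structure IsGap (A : Set ℝ) (x y : ℝ) : Prop where
  left_mem : x ∈ A
  right_mem : y ∈ A
  ne : x ≠ y
  not_between : ∀ z ∈ A, ¬(x < z ∧ z < y) ∧ ¬(y < z ∧ z < x)

/-- The points of `A` at distance at least `δ` from the rest of `A` on one side. -/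
def oneSidedIsolated (A : Set ℝ) (δ : ℝ) : Set ℝ :=
  {x ∈ A | (∀ z ∈ A, ¬(x < z ∧ z < x + δ)) ∨ ∀ z ∈ A, ¬(x - δ < z ∧ z < x)}

variable {A : Set ℝ}

theorem finite_of_separated {T : Set ℝ} {δ m M : ℝ} (hδ : 0 < δ) (hT : T ⊆ Icc m M)
    (hsep : ∀ x ∈ T, ∀ y ∈ T, x < y → x + δ ≤ y) : T.Finite := by
  refine Set.Finite.of_injOn (f := fun x : ℝ => ⌊x / δ⌋) (t := Icc ⌊m / δ⌋ ⌊M / δ⌋) ?_ ?_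
    (finite_Icc _ _)
  · intro x hx
    exact ⟨Int.floor_le_floor (by gcongr; exact (hT hx).1),
      Int.floor_le_floor (by gcongr; exact (hT hx).2)⟩
  · have key : ∀ x ∈ T, ∀ y ∈ T, ⌊x / δ⌋ = ⌊y / δ⌋ → ¬ x < y := by
      intro x hx y hy h hxy
      have h1 := Int.abs_sub_lt_one_of_floor_eq_floor h
      have h2 : x / δ + 1 ≤ y / δ := by
        rw [← div_self hδ.ne', ← add_div]
        gcongr
        exact hsep x hx y hy hxy
      rw [abs_lt] at h1
      linarith [h1.1]
    intro x hx y hy h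
    exact le_antisymm (not_lt.1 (key y hy x hx h.symm)) (not_lt.1 (key x hx y hy h))

theorem finite_oneSidedIsolated {δ m M : ℝ} (hδ : 0 < δ) (hA : A ⊆ Icc m M) :
    (oneSidedIsolated A δ).Finite := by
  have h1 : {x ∈ A | ∀ z ∈ A, ¬(x < z ∧ z < x + δ)}.Finite :=
    finite_of_separated hδ (fun x hx => hA hx.1)
      fun x hx y hy hxy => not_lt.1 fun h => hx.2 y hy.1 ⟨hxy, h⟩
  have h2 : {x ∈ A | ∀ z ∈ A, ¬(x - δ < z ∧ z < x)}.Finite :=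
    finite_of_separated hδ (fun x hx => hA hx.1)
      fun x hx y hy hxy => not_lt.1 fun h => hy.2 x hx.1 ⟨by linarith, hxy⟩
  refine (h1.union h2).subset ?_
  rintro x ⟨hx, h | h⟩
  exacts [Or.inl ⟨hx, h⟩, Or.inr ⟨hx, h⟩]

theorem mem_oneSidedIsolated_or_exists_isGap (hA : IsCompact A) {ε x : ℝ} (hε : 0 < ε)
    (hx : x ∈ oneSidedIsolated A ε) (δ : ℝ) :
    x ∈ oneSidedIsolated A δ ∨ ∃ y, IsGap A x y ∧ |y - x| < δ := by
  obtain ⟨hxA, h | h⟩ := hx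
  · by_cases hz : ∀ z ∈ A, ¬(x < z ∧ z < x + δ)
    · exact Or.inl ⟨hxA, Or.inl hz⟩
    push Not at hz
    obtain ⟨z, hzA, hxz, hzδ⟩ := hz
    have hge : ∀ w ∈ A, x < w → x + ε ≤ w := fun w hw hxw => not_lt.1 fun h' => h w hw ⟨hxw, h'⟩
    obtain ⟨y, ⟨hyA, hy⟩, hmin⟩ := (hA.inter_right (isClosed_Ici (a := x + ε))).exists_isLeast
      ⟨z, hzA, hge z hzA hxz⟩
    have hxy : x < y := by linarith [mem_Ici.1 hy]
    refine Or.inr ⟨y, ⟨hxA, hyA, hxy.ne, fun w hw => ⟨fun hwy => ?_, fun hwy => ?_⟩⟩, ?_⟩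
    · exact hwy.2.not_ge (hmin ⟨hw, hge w hw hwy.1⟩)
    · linarith
    · rw [abs_of_pos (by linarith)]
      linarith [hmin ⟨hzA, hge z hzA hxz⟩]
  · by_cases hz : ∀ z ∈ A, ¬(x - δ < z ∧ z < x)
    · exact Or.inl ⟨hxA, Or.inr hz⟩
    push Not at hz
    obtain ⟨z, hzA, hzδ, hxz⟩ := hz
    have hge : ∀ w ∈ A, w < x → w ≤ x - ε := fun w hw hxw => not_lt.1 fun h' => h w hw ⟨h', hxw⟩
    obtain ⟨y, ⟨hyA, hy⟩, hmax⟩ := (hA.inter_right (isClosed_Iic (a := x - ε))).exists_isGreatest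
      ⟨z, hzA, hge z hzA hxz⟩
    have hxy : y < x := by linarith [mem_Iic.1 hy]
    refine Or.inr ⟨y, ⟨hxA, hyA, hxy.ne', fun w hw => ⟨fun hwy => ?_, fun hwy => ?_⟩⟩, ?_⟩
    · linarith
    · exact hwy.1.not_ge (hmax ⟨hw, hge w hw hwy.2⟩)
    · rw [abs_of_neg (by linarith)]
      linarith [hmax ⟨hzA, hge z hzA hxz⟩]

theorem IsGap.mem_oneSidedIsolated {x y ε : ℝ} (h : IsGap A x y) (hε : ε ≤ |y - x|) :
    x ∈ oneSidedIsolated A ε := by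
  refine ⟨h.left_mem, ?_⟩
  rcases lt_or_gt_of_ne h.ne with hxy | hxy
  · rw [abs_of_pos (by linarith)] at hε
    exact Or.inl fun z hz hz' => (h.not_between z hz).1 ⟨hz'.1, by linarith [hz'.2]⟩
  · rw [abs_of_neg (by linarith)] at hε
    exact Or.inr fun z hz hz' => (h.not_between z hz).2 ⟨by linarith [hz'.1], hz'.2⟩

theorem IsGap.unique {x y y' : ℝ} (hx : ∀ ε > 0, ∃ z ∈ A, z ≠ x ∧ |z - x| < ε)
    (h : IsGap A x y) (h' : IsGap A x y') : y = y' := by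
  obtain ⟨z, hz, hzx, hlt⟩ := hx (min |y - x| |y' - x|)
    (lt_min (abs_pos.2 (sub_ne_zero.2 h.ne.symm)) (abs_pos.2 (sub_ne_zero.2 h'.ne.symm)))
  have hlt1 := hlt.trans_le (min_le_left _ _)
  have hlt2 := hlt.trans_le (min_le_right _ _)
  have h1 := h.not_between z hz
  have h2 := h'.not_between z hz
  have h3 := h.not_between y' h'.right_mem
  have h4 := h'.not_between y h.right_mem
  have h5 := h.ne
  have h6 := h'.ne
  grind

theorem sum_sub_le_of_disjoint (T : Finset ℝ) (Y : ℝ → ℝ) {m b : ℝ} (hmb : m ≤ b)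
    (hm : ∀ x ∈ T, m ≤ x) (hY : ∀ x ∈ T, ∀ x' ∈ T, x < x' → Y x ≤ x')
    (hb : ∀ x ∈ T, Y x ≤ b) : ∑ x ∈ T, (Y x - x) ≤ b - m := by
  induction T using Finset.induction_on_max generalizing b with
  | empty => simpa using hmb
  | insert a T hlt ih =>
    have hsum := ih (b := a) (hm a (by simp)) (fun x hx => hm x (by simp [hx]))
      (fun x hx x' hx' => hY x (by simp [hx]) x' (by simp [hx']))
      (fun x hx => hY x (by simp [hx]) a (by simp) (hlt x hx))
    rw [Finset.sum_insert fun ha => (hlt a ha).false]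
    linarith [hb a (by simp)]

theorem sum_abs_sub_le_of_isGap (T : Finset ℝ) (Y : ℝ → ℝ) {m M : ℝ} (hmM : m ≤ M)
    (hA : A ⊆ Icc m M) (hT : ∀ x ∈ T, IsGap A x (Y x)) :
    ∑ x ∈ T, |Y x - x| ≤ 2 * (M - m) := by
  classical
  have hsplit := Finset.sum_filter_add_sum_filter_not T (fun x => x < Y x) (fun x => |Y x - x|)
  have h1 : ∑ x ∈ T with x < Y x, |Y x - x| ≤ M - m := by
    rw [Finset.sum_congr rfl (g := fun x => Y x - x) fun x hx => abs_of_pos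
      (sub_pos.2 (Finset.mem_filter.1 hx).2)]
    refine sum_sub_le_of_disjoint _ Y hmM (fun x hx => ?_) (fun x hx x' hx' hlt => ?_)
      fun x hx => ?_
    · exact (hA (hT x (Finset.mem_filter.1 hx).1).left_mem).1
    · exact not_lt.1 fun h => ((hT x (Finset.mem_filter.1 hx).1).not_between x'
        (hT x' (Finset.mem_filter.1 hx').1).left_mem).1 ⟨hlt, h⟩
    · exact (hA (hT x (Finset.mem_filter.1 hx).1).right_mem).2
  have h2 : ∑ x ∈ T with ¬ x < Y x, |Y x - x| ≤ M - m := by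
    have hneg : ∀ x ∈ T.filter (fun x => ¬ x < Y x), Y x < x := fun x hx =>
      lt_of_le_of_ne (not_lt.1 (Finset.mem_filter.1 hx).2)
        (hT x (Finset.mem_filter.1 hx).1).ne.symm
    have := sum_sub_le_of_disjoint ((T.filter fun x => ¬ x < Y x).image Neg.neg)
      (fun x => -Y (-x)) (m := -M) (b := -m) (by linarith) ?_ ?_ ?_
    · rw [Finset.sum_image neg_injective.injOn] at this
      refine (le_of_eq (Finset.sum_congr rfl fun x hx => ?_)).trans (this.trans (by linarith))
      rw [abs_of_neg (sub_neg.2 (hneg x hx)), neg_neg]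
      ring
    · simp only [Finset.forall_mem_image]
      intro x hx
      exact neg_le_neg (hA (hT x (Finset.mem_filter.1 hx).1).left_mem).2
    · simp only [Finset.forall_mem_image, neg_neg]
      intro x hx x' hx' hlt
      exact neg_le_neg <| not_lt.1 fun h => ((hT x (Finset.mem_filter.1 hx).1).not_between x'
        (hT x' (Finset.mem_filter.1 hx').1).left_mem).2 ⟨h, neg_lt_neg_iff.1 hlt⟩
    · simp only [Finset.forall_mem_image, neg_neg]
      intro x hx
      exact neg_le_neg (hA (hT x (Finset.mem_filter.1 hx).1).right_mem).1
  linarith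

theorem IsGap.apK {K : Set ℝ} {g : Equiv.Perm K} {C δ x y : ℝ} (h : IsGap A x y) (hAK : A ⊆ K)
    (hg : ∀ z ∈ A, apK K g z ∈ A) (hg' : ∀ z ∈ A, apK K g⁻¹ z ∈ A)
    (hext : HasLipExtensions K g⁻¹ C δ K) (hδ : 0 < δ) (hxy : |apK K g y - apK K g x| < δ) :
    IsGap A (apK K g x) (apK K g y) := by
  have hx := hg x h.left_mem
  have hy := hg y h.right_mem
  obtain ⟨F, F', hF⟩ := hext _ (hAK hx)
  have hxb := Metric.mem_ball_self (x := _root_.apK K g x) hδ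
  have hyb : _root_.apK K g y ∈ Metric.ball (_root_.apK K g x) δ := hxy
  have hFx := hF.eq_apK _ hxb (hAK hx)
  have hFy := hF.eq_apK _ hyb (hAK hy)
  rw [apK_inv_apK] at hFx hFy
  refine ⟨hx, hy, (apK_injective g).ne h.ne, fun z hz => ?_⟩
  have hzb : (_root_.apK K g x < z ∧ z < _root_.apK K g y) ∨
      (_root_.apK K g y < z ∧ z < _root_.apK K g x) → z ∈ Metric.ball (_root_.apK K g x) δ := by
    intro hz'
    rw [Metric.mem_ball, Real.dist_eq]
    rw [abs_lt] at hxy ⊢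
    rcases hz' with hz' | hz' <;> constructor <;> linarith [hz'.1, hz'.2]
  have hnot := h.not_between _ (hg' z hz)
  rcases hF.strictMonoOn_or_strictAntiOn hδ with hmono | hmono <;>
    refine ⟨fun hz' => ?_, fun hz' => ?_⟩
  · have hzb := hzb (Or.inl hz')
    rw [← hF.eq_apK z hzb (hAK hz), ← hFx, ← hFy] at hnot
    exact hnot.1 ⟨hmono hxb hzb hz'.1, hmono hzb hyb hz'.2⟩
  · have hzb := hzb (Or.inr hz')
    rw [← hF.eq_apK z hzb (hAK hz), ← hFx, ← hFy] at hnot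
    exact hnot.2 ⟨hmono hyb hzb hz'.1, hmono hzb hxb hz'.2⟩
  · have hzb := hzb (Or.inl hz')
    rw [← hF.eq_apK z hzb (hAK hz), ← hFx, ← hFy] at hnot
    exact hnot.2 ⟨hmono hzb hyb hz'.2, hmono hxb hzb hz'.1⟩
  · have hzb := hzb (Or.inr hz')
    rw [← hF.eq_apK z hzb (hAK hz), ← hFx, ← hFy] at hnot
    exact hnot.1 ⟨hmono hzb hxb hz'.2, hmono hyb hzb hz'.1⟩

theorem exists_apK_mem_oneSidedIsolated {K : Set ℝ} {g : Equiv.Perm K} {C δ ε x : ℝ}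
    (hε : 0 < ε) (h : x ∈ oneSidedIsolated A ε) (hAK : A ⊆ K)
    (hg : ∀ z ∈ A, apK K g z ∈ A) (hg' : ∀ z ∈ A, apK K g⁻¹ z ∈ A)
    (hext : HasLipExtensions K g⁻¹ C δ K) (hδ : 0 < δ) :
    ∃ η > 0, apK K g x ∈ oneSidedIsolated A η := by
  have hx := hg x h.1
  obtain ⟨F, F', hF⟩ := hext _ (hAK hx)
  have hxb := Metric.mem_ball_self (x := apK K g x) hδ
  have hFx := hF.eq_apK _ hxb (hAK hx)
  rw [apK_inv_apK] at hFx
  obtain ⟨η, hη, hcont⟩ := Metric.continuousAt_iff.1 (hF.hasDerivAt _ hxb).continuousAt ε hε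
  have hclose : ∀ z ∈ A, |z - apK K g x| < min δ η → z ∈ Metric.ball (apK K g x) δ ∧ F z ∈ A ∧
      x - ε < F z ∧ F z < x + ε := by
    intro z hz hlt
    have hzb : z ∈ Metric.ball (apK K g x) δ := hlt.trans_le (min_le_left _ _)
    have h1 := hcont (x := z) (hlt.trans_le (min_le_right _ _))
    rw [hFx, Real.dist_eq, abs_lt] at h1
    refine ⟨hzb, ?_, by linarith, by linarith⟩
    rw [hF.eq_apK z hzb (hAK hz)]
    exact hg' z hz
  have hleft : ∀ z, apK K g x - min δ η < z ∧ z < apK K g x → |z - apK K g x| < min δ η := by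
    intro z hz
    rw [abs_lt]
    constructor <;> linarith
  have hright : ∀ z, apK K g x < z ∧ z < apK K g x + min δ η → |z - apK K g x| < min δ η := by
    intro z hz
    rw [abs_lt]
    constructor <;> linarith
  refine ⟨min δ η, lt_min hδ hη, hx, ?_⟩
  rcases hF.strictMonoOn_or_strictAntiOn hδ with hmono | hmono <;> rcases h.2 with h | h
  · refine Or.inl fun z hz hz' => ?_
    obtain ⟨hzb, hFA, -, hlt⟩ := hclose z hz (hright z hz')
    exact h _ hFA ⟨hFx ▸ hmono hxb hzb hz'.1, hlt⟩
  · refine Or.inr fun z hz hz' => ?_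
    obtain ⟨hzb, hFA, hlt, -⟩ := hclose z hz (hleft z hz')
    exact h _ hFA ⟨hlt, hFx ▸ hmono hzb hxb hz'.2⟩
  · refine Or.inr fun z hz hz' => ?_
    obtain ⟨hzb, hFA, -, hlt⟩ := hclose z hz (hleft z hz')
    exact h _ hFA ⟨hFx ▸ hmono hzb hxb hz'.2, hlt⟩
  · refine Or.inl fun z hz hz' => ?_
    obtain ⟨hzb, hFA, hlt, -⟩ := hclose z hz (hright z hz')
    exact h _ hFA ⟨hlt, hFx ▸ hmono hxb hzb hz'.1⟩

end Gap

section Minimal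

variable {K A : Set ℝ} {G : Subgroup (Equiv.Perm K)}

theorem IsMinimalInvariantSet.exists_apK_near (hA : IsMinimalInvariantSet K G A)
    (hG : ∀ g ∈ G, Continuous fun x : K => g x) {p u ε : ℝ} (hp : p ∈ A) (hu : u ∈ A)
    (hε : 0 < ε) : ∃ h ∈ G, |apK K h p - u| < ε := by
  obtain ⟨-, hAK, hcl, hinv, hmin⟩ := hA
  set O : Set ℝ := {x | ∃ h ∈ G, apK K h p = x}
  have hOA : O ⊆ A := by
    rintro _ ⟨h, hh, rfl⟩
    exact hinv h hh p hp
  have hclO : closure O ⊆ A := hcl.closure_subset_iff.2 hOA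
  have heq : closure O = A := by
    refine hmin _ ⟨p, subset_closure ⟨1, G.one_mem, apK_one p⟩⟩ hclO isClosed_closure ?_
    intro g hg x hx
    have hmaps : MapsTo (apK K g) O O := by
      rintro _ ⟨h, hh, rfl⟩
      exact ⟨g * h, G.mul_mem hg hh, apK_mul g h p⟩
    exact hmaps.closure_of_continuousOn
      ((continuousOn_apK (hG g hg)).mono (hclO.trans hAK)) hx
  rw [← heq] at hu
  obtain ⟨_, ⟨h, hh, rfl⟩, hlt⟩ := Metric.mem_closure_iff.1 hu ε hε
  exact ⟨h, hh, by rwa [dist_comm, Real.dist_eq] at hlt⟩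

theorem IsMinimalInvariantSet.infinite_orbit (hA : IsMinimalInvariantSet K G A)
    (hG : ∀ g ∈ G, Continuous fun x : K => g x) (hinf : A.Infinite) {p : ℝ} (hp : p ∈ A) :
    {x | ∃ h ∈ G, apK K h p = x}.Infinite := by
  intro hfin
  refine hinf (hfin.subset fun u hu => ?_)
  rw [← hfin.isClosed.closure_eq, Metric.mem_closure_iff]
  intro ε hε
  obtain ⟨h, hh, hlt⟩ := hA.exists_apK_near hG hp hu hε
  exact ⟨_, ⟨h, hh, rfl⟩, by rwa [dist_comm, Real.dist_eq]⟩

theorem IsMinimalInvariantSet.exists_ne_near (hA : IsMinimalInvariantSet K G A)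
    (hG : ∀ g ∈ G, Continuous fun x : K => g x) (hK : IsCompact K) (hinf : A.Infinite)
    {x : ℝ} (hx : x ∈ A) {ε : ℝ} (hε : 0 < ε) : ∃ z ∈ A, z ≠ x ∧ |z - x| < ε := by
  obtain ⟨-, hAK, hcl, hinv, hmin⟩ := hA
  obtain ⟨q, hq, hacc⟩ := hinf.exists_accPt_of_subset_isCompact
    (hK.of_isClosed_subset hcl hAK) subset_rfl
  have heq : {x ∈ A | ∀ ε > 0, ∃ z ∈ A, z ≠ x ∧ |z - x| < ε} = A := by
    refine hmin _ ⟨q, hq, fun ε hε => ?_⟩ (sep_subset _ _) ?_ ?_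
    · obtain ⟨z, ⟨hz, hzA⟩, hne⟩ := accPt_iff_nhds.1 hacc _ (Metric.ball_mem_nhds q hε)
      exact ⟨z, hzA, hne, hz⟩
    · refine isClosed_of_closure_subset fun y hy => ?_
      refine ⟨hcl.closure_subset_iff.2 (sep_subset _ _) hy, fun ε hε => ?_⟩
      obtain ⟨b, ⟨hbA, hb⟩, hyb⟩ := Metric.mem_closure_iff.1 hy ε hε
      by_cases hby : b = y
      · exact hby ▸ hb ε hε
      · exact ⟨b, hbA, hby, by rwa [dist_comm, Real.dist_eq] at hyb⟩
    · rintro g hg y ⟨hyA, hy⟩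
      refine ⟨hinv g hg y hyA, fun ε hε => ?_⟩
      obtain ⟨δ, hδ, hcont⟩ :=
        Metric.continuousOn_iff.1 (continuousOn_apK (hG g hg)) y (hAK hyA) ε hε
      obtain ⟨z, hz, hne, hlt⟩ := hy δ hδ
      exact ⟨_, hinv g hg z hz, (apK_injective g).ne hne, hcont z (hAK hz) hlt⟩
  exact (heq.ge hx).2 ε hε

end Minimal

section Graph

variable {K : Set ℝ}

/-- The graph on `ℝ` joining the distinct points of `T` which differ by the action of an
element of `S`. -/
def stepGraph (K : Set ℝ) (S : Set (Equiv.Perm K)) (T : Set ℝ) : SimpleGraph ℝ where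
  Adj x y := x ≠ y ∧ x ∈ T ∧ y ∈ T ∧ ∃ s, (s ∈ S ∨ s⁻¹ ∈ S) ∧ apK K s x = y
  symm := ⟨by
    rintro x y ⟨hne, hx, hy, s, hs, rfl⟩
    exact ⟨hne.symm, hy, hx, s⁻¹, by simpa [or_comm] using hs, apK_inv_apK s x⟩⟩
  loopless := ⟨fun x h => h.1 rfl⟩

/-- Removing finitely many points from an infinite orbit leaves an infinite connected
component in the Schreier graph. -/
theorem exists_infinite_reachable {S : Set (Equiv.Perm K)} (hS : S.Finite) {V B : Set ℝ}
    (hV : ∀ s, (s ∈ S ∨ s⁻¹ ∈ S) → ∀ x ∈ V, apK K s x ∈ V) (hB : B.Finite) {x₀ : ℝ}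
    (hx₀ : x₀ ∈ V) (hinf : {x | ∃ h ∈ Subgroup.closure S, apK K h x₀ = x}.Infinite) :
    ∃ u ∈ V \ B, {w | (stepGraph K S (V \ B)).Reachable u w}.Infinite := by
  by_contra! hcon
  have hS' : {s | s ∈ S ∨ s⁻¹ ∈ S}.Finite := hS.union (hS.preimage inv_injective.injOn)
  set N : Set ℝ := insert x₀ (image2 (fun s x => apK K s x) {s | s ∈ S ∨ s⁻¹ ∈ S} B)
  have hNfin : N.Finite := (hS'.image2 _ hB).insert _
  set P : Set ℝ := {w ∈ V | w ∈ B ∨ ∃ u ∈ N ∩ (V \ B), (stepGraph K S (V \ B)).Reachable u w}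
  have hstep : ∀ s, (s ∈ S ∨ s⁻¹ ∈ S) → ∀ w ∈ P, apK K s w ∈ P := by
    rintro s hs w ⟨hwV, hw⟩
    refine ⟨hV s hs w hwV, or_iff_not_imp_left.2 fun hsB => ?_⟩
    have hsVB : apK K s w ∈ V \ B := ⟨hV s hs w hwV, hsB⟩
    by_cases hwB : w ∈ B
    · exact ⟨_, ⟨mem_insert_of_mem _ (mem_image2_of_mem hs hwB), hsVB⟩, .refl _⟩
    · obtain ⟨u, hu, huw⟩ := hw.resolve_left hwB
      refine ⟨u, hu, huw.trans ?_⟩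
      by_cases hne : w = apK K s w
      · rw [← hne]
      · exact SimpleGraph.Adj.reachable ⟨hne, ⟨hwV, hwB⟩, hsVB, s, hs, rfl⟩
  have hx₀P : x₀ ∈ P := by
    refine ⟨hx₀, or_iff_not_imp_left.2 fun h => ?_⟩
    exact ⟨x₀, ⟨mem_insert _ _, hx₀, h⟩, .refl _⟩
  refine hinf ((hB.union ((hNfin.inter_of_left (V \ B)).biUnion
    fun u hu => hcon u hu.2)).subset ?_)
  rintro _ ⟨h, hh, rfl⟩
  have hmem : apK K h x₀ ∈ P := apK_mem_of_mem_closure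
    (fun s hs x hx => ⟨hstep s (Or.inl hs) x hx, hstep s⁻¹ (Or.inr (by simpa using hs)) x hx⟩)
    hh hx₀P
  rcases hmem.2 with h | ⟨u, hu, huw⟩
  · exact Or.inl h
  · exact Or.inr (mem_biUnion hu huw)

end Graph

section Contraction

variable {K A : Set ℝ}

theorem HasDerivAt.hasDerivOnK {f : Equiv.Perm K} {F : ℝ → ℝ} {x d : ℝ} (h : HasDerivAt F d x)
    (hx : F x = apK K f x) (hF : ∀ᶠ y in nhds x, y ∈ K → F y = apK K f y) :
    HasDerivOnK K f x d := by
  have ht := (hasDerivAt_iff_tendsto_slope.1 h).mono_left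
    (nhdsWithin_mono x fun y (hy : y ∈ K \ {x}) => hy.2)
  refine ht.congr' ?_
  filter_upwards [nhdsWithin_le_nhds hF, self_mem_nhdsWithin] with y hy hyK
  rw [slope_def_field, hx, hy hyK.1]

theorem exists_hyperbolic_of_contraction {f : Equiv.Perm K} {F F' : ℝ → ℝ} {c r R : ℝ}
    (hcl : IsClosed A) (hAK : A ⊆ K) (hf : ∀ x ∈ A, apK K f x ∈ A) (hc : c ∈ A) (hr : 0 ≤ r)
    (hrR : r < R) (hderiv : ∀ z ∈ Metric.ball c R, HasDerivAt F (F' z) z)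
    (hbound : ∀ z ∈ Metric.ball c R, |F' z| ≤ 1 / 2)
    (hext : ∀ z ∈ Metric.ball c R, z ∈ K → F z = apK K f z)
    (hmaps : ∀ z ∈ Metric.closedBall c r, z ∈ A → apK K f z ∈ Metric.closedBall c r) :
    ∃ x ∈ K, apK K f x = x ∧ ∃ d : ℝ, HasDerivOnK K f x d ∧ |d| ≠ 1 := by
  have hsub : Metric.closedBall c r ⊆ Metric.ball c R := Metric.closedBall_subset_ball hrR
  have hmapsTo : MapsTo (apK K f) (A ∩ Metric.closedBall c r) (A ∩ Metric.closedBall c r) :=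
    fun z hz => ⟨hf z hz.1, hmaps z hz.2 hz.1⟩
  have hcontr : ContractingWith (1 / 2) (hmapsTo.restrict _ _ _) := by
    refine ⟨?_, LipschitzWith.of_dist_le_mul fun x y => ?_⟩
    · rw [← NNReal.coe_lt_coe]
      norm_num
    have h := (convex_ball c R).norm_image_sub_le_of_norm_hasDerivWithin_le
      (fun w hw => (hderiv w hw).hasDerivWithinAt) hbound (hsub y.2.2) (hsub x.2.2)
    rw [hext _ (hsub x.2.2) (hAK x.2.1), hext _ (hsub y.2.2) (hAK y.2.1)] at h
    simpa [Subtype.dist_eq, Real.dist_eq] using h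
  obtain ⟨x, hx, hfix, -⟩ := hcontr.exists_fixedPoint'
    (hcl.inter Metric.isClosed_closedBall).isComplete hmapsTo
    ⟨hc, Metric.mem_closedBall_self hr⟩ (edist_ne_top _ _)
  have hxR := hsub hx.2
  refine ⟨x, hAK hx.1, hfix, F' x, (hderiv x hxR).hasDerivOnK (hext x hxR (hAK hx.1)) ?_, ?_⟩
  · filter_upwards [Metric.isOpen_ball.mem_nhds hxR] using hext
  · intro h
    have := hbound x hxR
    norm_num [h] at this

end Contraction

section Sacksteder

variable {K A : Set ℝ} {G : Subgroup (Equiv.Perm K)}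

/-- Expansion estimate for the connected component of `u` in the graph of short gaps. -/
theorem exists_extension_of_reachable {S : Set (Equiv.Perm K)} {T : Set ℝ} {Y : ℝ → ℝ}
    {C δ m M u w : ℝ} (hC : 0 ≤ C) (hAK : A ⊆ K) (hmM : m ≤ M) (hA : A ⊆ Icc m M)
    (hSG : ∀ s, (s ∈ S ∨ s⁻¹ ∈ S) → s ∈ G)
    (hext : ∀ s, (s ∈ S ∨ s⁻¹ ∈ S) → HasLipExtensions K s C δ K)
    (hgap : ∀ x ∈ T, IsGap A x (Y x)) (hlt : ∀ x ∈ T, |Y x - x| < δ)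
    (hY : ∀ s, (s ∈ S ∨ s⁻¹ ∈ S) → ∀ x ∈ T, apK K s x ∈ T → apK K s (Y x) = Y (apK K s x))
    (hu : u ∈ T) (hw : (stepGraph K S T).Reachable u w) :
    w ∈ T ∧ ∃ g ∈ G, apK K g u = w ∧ ∃ Φ Φ' : ℝ → ℝ,
      ∀ z ∈ Metric.ball u (|Y u - u| * Real.exp (-(2 * C * (2 * (M - m))))),
        HasDerivAt Φ (Φ' z) z ∧
        |Φ' z| ≤ |Y w - w| / |Y u - u| * Real.exp (2 * C * (2 * (M - m))) ∧
        (z ∈ K → Φ z = apK K g z) := by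
  classical
  obtain ⟨p, hp⟩ := hw.exists_isPath
  have hmem : ∀ i ≤ p.length, p.getVert i ∈ T := by
    intro i hi
    cases i with
    | zero => simpa using hu
    | succ j => exact (p.adj_getVert_succ (by lia)).2.2.1
  have hs : ∀ i, ∃ s, i < p.length →
      (s ∈ S ∨ s⁻¹ ∈ S) ∧ apK K s (p.getVert i) = p.getVert (i + 1) := by
    intro i
    by_cases hi : i < p.length
    · obtain ⟨s, hs⟩ := (p.adj_getVert_succ hi).2.2.2
      exact ⟨s, fun _ => hs⟩
    · exact ⟨1, fun h => absurd h hi⟩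
  choose s hs using hs
  have hsum : ∑ i ∈ Finset.range p.length, |Y (p.getVert i) - p.getVert i| ≤ 2 * (M - m) := by
    have hinj : InjOn p.getVert (Finset.range p.length : Set ℕ) := fun i hi j hj hij =>
      hp.getVert_injOn (Finset.mem_range.1 hi).le (Finset.mem_range.1 hj).le hij
    have h := sum_abs_sub_le_of_isGap ((Finset.range p.length).image p.getVert) Y hmM hA (by
      simp only [Finset.forall_mem_image, Finset.mem_range]
      exact fun i hi => hgap _ (hmem i hi.le))
    rwa [Finset.sum_image hinj] at h
  have := exists_extension_of_orbit (G := G) (x := p.getVert) (y := fun i => Y (p.getVert i))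
    (s := s) (n := p.length) (δ := δ) hC
    (fun i hi => hAK (hgap _ (hmem i hi)).left_mem)
    (fun i hi => hAK (hgap _ (hmem i hi)).right_mem)
    (fun i hi => (hgap _ (hmem i hi)).ne) (fun i hi => hlt _ (hmem i hi))
    (fun i hi => hSG _ (hs i hi).1) (fun i hi => hext _ (hs i hi).1) (fun i hi => (hs i hi).2)
    (fun i hi => ?_) hsum
  · simpa using And.intro (by simpa using hmem p.length le_rfl) this
  · rw [hY _ (hs i hi).1 _ (hmem i hi.le) (by rw [(hs i hi).2]; exact hmem _ hi), (hs i hi).2]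

/-- A point whose orbit enters smaller and smaller gaps with controlled derivative is close to
a hyperbolic fixed point. -/
theorem exists_hyperbolic_of_extensions (hG : ∀ g ∈ G, MemDiffLip K g) (hK : IsCompact K)
    (hA : IsMinimalInvariantSet K G A) {W : Set ℝ} {Y : ℝ → ℝ} {E r m M u : ℝ}
    (hbdd : A ⊆ Icc m M) (hu : u ∈ A) (hE : 0 < E) (hr : 0 < r) (hWinf : W.Infinite)
    (hgap : ∀ w ∈ W, IsGap A w (Y w))
    (hW : ∀ w ∈ W, ∃ g ∈ G, apK K g u = w ∧ ∃ Φ Φ' : ℝ → ℝ, ∀ z ∈ Metric.ball u r,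
      HasDerivAt Φ (Φ' z) z ∧ |Φ' z| ≤ |Y w - w| * E ∧ (z ∈ K → Φ z = apK K g z)) :
    ∃ g ∈ G, ∃ x ∈ K, apK K g x = x ∧ ∃ d : ℝ, HasDerivOnK K g x d ∧ |d| ≠ 1 := by
  have hAK := hA.2.1
  have hcl := hA.2.2.1
  have hinv := hA.2.2.2.1
  have hub := Metric.mem_ball_self (x := u) hr
  obtain ⟨p, hp, hacc⟩ := hWinf.exists_accPt_of_subset_isCompact (hK.of_isClosed_subset hcl hAK)
    fun w hw => (hgap w hw).left_mem
  obtain ⟨h, hh, hhp⟩ := hA.exists_apK_near (fun g hg => (hG g hg).1) hp hu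
    (show 0 < r / 4 by positivity)
  obtain ⟨C, δ, hC, hδ, hext⟩ := (hG h hh).2.2.exists_hasLipExtensions hK
  obtain ⟨F, F', hF⟩ := hext p (hAK hp)
  have hpb := Metric.mem_ball_self (x := p) hδ
  set D := |F' p| * Real.exp (C * δ) with hD
  have hF'p := abs_pos.2 (hF.ne_zero p hpb)
  have hD0 : 0 < D := mul_pos hF'p (Real.exp_pos _)
  have hFD : ∀ z ∈ Metric.ball p δ, |F' z| ≤ D := by
    intro z hz
    have hlog := hF.log_le z hz p hpb
    have hF'z := abs_pos.2 (hF.ne_zero z hz)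
    have hzp : |z - p| ≤ δ := (Metric.mem_ball.1 hz).le
    rw [← Real.log_le_log_iff hF'z hD0, hD, Real.log_mul hF'p.ne' (Real.exp_ne_zero _),
      Real.log_exp]
    nlinarith
  set η := min δ (r / (4 * D))
  have hη0 : 0 < η := lt_min hδ (by positivity)
  set ε := min (1 / (2 * D * E)) (η / (2 * E * r))
  have hε0 : 0 < ε := lt_min (by positivity) (by positivity)
  obtain ⟨w, ⟨hwp, hwW⟩, hwε⟩ : ∃ w ∈ Metric.ball p (η / 2) ∩ W, |Y w - w| < ε := by
    obtain ⟨w, hw, hw'⟩ := ((Set.Infinite.of_accPt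
      (hacc.nhds_inter (Metric.ball_mem_nhds p (half_pos hη0)))).sdiff
      (finite_oneSidedIsolated hε0 hbdd)).nonempty
    exact ⟨w, hw, not_le.1 fun hle => hw' ((hgap w hw.2).mem_oneSidedIsolated hle)⟩
  obtain ⟨g, hg, hgu, Φ, Φ', hΦ⟩ := hW w hwW
  have hwE : |Y w - w| * E ≤ ε * E := by gcongr
  have hΦu : Φ u = w := ((hΦ u hub).2.2 (hAK hu)).trans hgu
  have hΦp : ∀ z ∈ Metric.ball u r, |Φ z - p| < η := by
    intro z hz
    have hmv := (convex_ball u r).norm_image_sub_le_of_norm_hasDerivWithin_le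
      (fun v hv => (hΦ v hv).1.hasDerivWithinAt)
      (fun v hv => ((hΦ v hv).2.1.trans hwE)) hub hz
    rw [hΦu, Real.norm_eq_abs, Real.norm_eq_abs] at hmv
    have hzu : |z - u| ≤ r := (Metric.mem_ball.1 hz).le
    have h1 : ε * E * |z - u| ≤ η / 2 := by
      calc ε * E * |z - u| ≤ η / (2 * E * r) * E * r := by
            gcongr
            exact min_le_right _ _
        _ = η / 2 := by field_simp
    have h2 : |w - p| < η / 2 := hwp
    have h3 := abs_sub_le (Φ z) w p
    linarith
  have hball : ∀ z ∈ Metric.ball u r, Φ z ∈ Metric.ball p δ := fun z hz =>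
    (hΦp z hz).trans_le (min_le_left _ _)
  have hFp := hF.eq_apK p hpb (hAK hp)
  have hcomp : ∀ z ∈ Metric.ball u r, z ∈ K → F (Φ z) = apK K (h * g) z := by
    intro z hz hzK
    have hΦz := (hΦ z hz).2.2 hzK
    rw [apK_mul, ← hΦz]
    exact hF.eq_apK _ (hball z hz) (by rw [hΦz]; exact apK_mem g hzK)
  refine ⟨h * g, G.mul_mem hh hg, exists_hyperbolic_of_contraction (F := F ∘ Φ)
    (F' := fun z => F' (Φ z) * Φ' z) hcl hAK (hinv _ (G.mul_mem hh hg)) hu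
    (half_pos hr).le (half_lt_self hr)
    (fun z hz => (hF.hasDerivAt _ (hball z hz)).comp z (hΦ z hz).1) (fun z hz => ?_) hcomp
    fun z hz hzA => ?_⟩
  · rw [abs_mul]
    calc |F' (Φ z)| * |Φ' z| ≤ D * (1 / (2 * D * E) * E) := by
          refine mul_le_mul (hFD _ (hball z hz)) ?_ (abs_nonneg _) hD0.le
          refine ((hΦ z hz).2.1.trans hwE).trans ?_
          gcongr
          exact min_le_left _ _
      _ = 1 / 2 := by field_simp
  · have hz' := Metric.closedBall_subset_ball (half_lt_self hr) hz
    have hmv := (convex_ball p δ).norm_image_sub_le_of_norm_hasDerivWithin_le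
      (fun v hv => (hF.hasDerivAt v hv).hasDerivWithinAt) hFD hpb (hball z hz')
    rw [hcomp z hz' (hAK hzA), hFp, Real.norm_eq_abs, Real.norm_eq_abs] at hmv
    have h1 : D * |Φ z - p| ≤ r / 4 := by
      calc D * |Φ z - p| ≤ D * (r / (4 * D)) := by
            gcongr
            exact (hΦp z hz').le.trans (min_le_right _ _)
        _ = r / 4 := by field_simp
    have h2 := abs_sub_le (apK K (h * g) z) (apK K h p) u
    rw [Metric.mem_closedBall, Real.dist_eq]
    linarith

theorem IsMinimalInvariantSet.exists_hyperbolic (hG : ∀ g ∈ G, MemDiffLip K g) (hFG : G.FG)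
    (hK : IsCompact K) (hA : IsMinimalInvariantSet K G A) (hinf : A.Infinite) :
    ∃ g ∈ G, ∃ x ∈ K, apK K g x = x ∧ ∃ d : ℝ, HasDerivOnK K g x d ∧ |d| ≠ 1 := by
  have hcont : ∀ g ∈ G, Continuous fun x : K => g x := fun g hg => (hG g hg).1
  have hAK := hA.2.1
  have hinv := hA.2.2.2.1
  have hAc : IsCompact A := hK.of_isClosed_subset hA.2.2.1 hAK
  obtain ⟨S, rfl⟩ := hFG
  set S' : Set (Equiv.Perm K) := {s | s ∈ (S : Set (Equiv.Perm K)) ∨ s⁻¹ ∈ (S : Set (Equiv.Perm K))}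
    with hS'
  have hSG : ∀ s ∈ S', s ∈ Subgroup.closure (S : Set (Equiv.Perm K)) := by
    rintro s (hs | hs)
    · exact Subgroup.subset_closure hs
    · exact inv_mem_iff.1 (Subgroup.subset_closure hs)
  have hSinv : ∀ s ∈ S', s⁻¹ ∈ S' := fun s hs => by simpa [hS', or_comm] using hs
  have hS'fin : S'.Finite := S.finite_toSet.union (S.finite_toSet.preimage inv_injective.injOn)
  obtain ⟨C, δ₀, hC, hδ₀, hext⟩ :=
    exists_uniform_hasLipExtensions hS'fin (fun s hs => (hG s (hSG s hs)).2.2) hK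
  obtain ⟨δ₁, hδ₁, hmod⟩ :=
    exists_uniform_modulus hS'fin (fun s hs => hcont s (hSG s hs)) hK hδ₀
  set δ := min δ₀ δ₁
  have hδ : 0 < δ := lt_min hδ₀ hδ₁
  obtain ⟨a, haA, ha⟩ := hAc.exists_isLeast hinf.nonempty
  obtain ⟨b, -, hb⟩ := hAc.exists_isGreatest hinf.nonempty
  have hab : A ⊆ Icc a b := fun x hx => ⟨ha hx, hb hx⟩
  set V : Set ℝ := {x | ∃ ε > 0, x ∈ oneSidedIsolated A ε}
  obtain ⟨u, hu, hW⟩ := exists_infinite_reachable (V := V) S.finite_toSet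
    (fun s hs x ⟨ε, hε, hx⟩ => exists_apK_mem_oneSidedIsolated hε hx hAK
      (hinv s (hSG s hs)) (hinv _ (hSG _ (hSinv s hs))) (hext _ (hSinv s hs)) hδ₀)
    (finite_oneSidedIsolated hδ hab)
    ⟨1, one_pos, haA, Or.inr fun z hz hz' => hz'.2.not_ge (ha hz)⟩
    (hA.infinite_orbit hcont hinf haA)
  set T := V \ oneSidedIsolated A δ
  have hgap : ∀ x, ∃ y, x ∈ T → IsGap A x y ∧ |y - x| < δ := by
    intro x
    by_cases hx : x ∈ T
    · obtain ⟨⟨ε, hε, hxε⟩, hxδ⟩ := hx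
      obtain ⟨y, hy⟩ := (mem_oneSidedIsolated_or_exists_isGap hAc hε hxε δ).resolve_left hxδ
      exact ⟨y, fun _ => hy⟩
    · exact ⟨0, fun h => absurd h hx⟩
  choose Y hY using hgap
  have hYs : ∀ s ∈ S', ∀ x ∈ T, apK K s x ∈ T → apK K s (Y x) = Y (apK K s x) := by
    intro s hs x hx hsx
    have hxgap := (hY x hx).1
    have hgap' := hxgap.apK hAK (hinv s (hSG s hs)) (hinv _ (hSG _ (hSinv s hs)))
      (hext _ (hSinv s hs)) hδ₀ (hmod s hs x (hAK hxgap.left_mem) _ (hAK hxgap.right_mem)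
        ((hY x hx).2.trans_le (min_le_right _ _)))
    exact hgap'.unique (fun ε hε => hA.exists_ne_near hcont hK hinf hgap'.left_mem hε)
      (hY _ hsx).1
  have hreach := fun w => exists_extension_of_reachable (w := w) hC hAK ((ha haA).trans (hb haA)) hab
    hSG hext (fun x hx => (hY x hx).1) (fun x hx => (hY x hx).2.trans_le (min_le_left _ _)) hYs hu
  have hYu : 0 < |Y u - u| := abs_pos.2 (sub_ne_zero.2 (hY u hu).1.ne.symm)
  refine exists_hyperbolic_of_extensions hG hK hA (Y := Y)
    (E := Real.exp (2 * C * (2 * (b - a))) / |Y u - u|) hab (hY u hu).1.left_mem (by positivity)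
    (mul_pos hYu (Real.exp_pos (-(2 * C * (2 * (b - a)))))) hW
    (fun w hw => (hY w (hreach w hw).1).1) fun w hw => ?_
  obtain ⟨-, g, hg, hgu, Φ, Φ', hΦ⟩ := hreach w hw
  refine ⟨g, hg, hgu, Φ, Φ', fun z hz => ⟨(hΦ z hz).1, (hΦ z hz).2.1.trans_eq ?_, (hΦ z hz).2.2⟩⟩
  ring

end Sacksteder

/-- Either some element of `G` has a hyperbolic fixed point, or
every minimal invariant set of the action of `G` on `K` is finite. -/
theorem sacksteder_alternative (K : Set ℝ) (hK : IsCantorInR K)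
    (G : Subgroup (Equiv.Perm K))
    (hdiff : ∀ g ∈ G, MemDiffLip K g)
    (hFG : G.FG) :
    (∃ g ∈ G, ∃ x ∈ K, apK K g x = x ∧ ∃ d : ℝ, HasDerivOnK K g x d ∧ |d| ≠ 1) ∨
    (∀ A : Set ℝ, IsMinimalInvariantSet K G A → A.Finite) := by
  refine or_iff_not_imp_right.2 fun h => ?_
  push Not at h
  obtain ⟨A, hA, hinf⟩ := h
  exact hA.exists_hyperbolic hdiff hFG hK.2.1 hinf
end

section
/- Let K be a Cantor set in ℝ and let G be a finitely generated periodic subgroup of diff^{1+Lip}(K). Then for every point x ∈ K there exists a G-invariant clopen (in K) neighbourhood U of x such that the group of restrictions to U of the elements of G is finite. -/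
open Set

open Filter Topology Pointwise MulAction

/-- The slopes of `f` based at `p` vary by at most the factor `exp (C * r)` over points whose
distances to `p` add up to `r`. -/
def SlopeBound {K : Set ℝ} (f : K → K) (C : ℝ) (p y z : K) : Prop :=
  dist (f y) (f p) * dist z p ≤
    Real.exp (C * (dist y p + dist z p)) * (dist (f z) (f p) * dist y p)

theorem exists_dist_eq_abs_deriv_mul_dist {F F' : ℝ → ℝ} {a b p y : ℝ}
    (hF : ∀ t ∈ Ioo a b, HasDerivAt F (F' t) t) (hp : p ∈ Ioo a b) (hy : y ∈ Ioo a b) :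
    ∃ t ∈ Ioo a b, dist (F y) (F p) = |F' t| * dist y p ∧ dist t p ≤ dist y p := by
  have key : ∀ u v : ℝ, u ∈ Ioo a b → v ∈ Ioo a b → u < v →
      ∃ t ∈ Ioo u v, t ∈ Ioo a b ∧ |F v - F u| = |F' t| * |v - u| := by
    intro u v hu hv huv
    have hsub : Icc u v ⊆ Ioo a b := fun t ht ↦ ⟨hu.1.trans_le ht.1, ht.2.trans_lt hv.2⟩
    obtain ⟨t, ht, h⟩ := exists_hasDerivAt_eq_slope F F' huv
      (fun t ht ↦ (hF t (hsub ht)).continuousAt.continuousWithinAt)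
      (fun t ht ↦ hF t (hsub (Ioo_subset_Icc_self ht)))
    refine ⟨t, ht, hsub (Ioo_subset_Icc_self ht), ?_⟩
    rw [← abs_mul, h, div_mul_cancel₀ _ (sub_pos.2 huv).ne']
  simp only [Real.dist_eq]
  rcases lt_trichotomy p y with h | rfl | h
  · obtain ⟨t, ht, htab, e⟩ := key p y hp hy h
    refine ⟨t, htab, e, ?_⟩
    rw [abs_of_pos (sub_pos.2 ht.1), abs_of_pos (sub_pos.2 h)]
    linarith [ht.2]
  · exact ⟨p, hp, by simp, le_rfl⟩
  · obtain ⟨t, ht, htab, e⟩ := key y p hy hp h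
    refine ⟨t, htab, by rw [abs_sub_comm, e, abs_sub_comm y], ?_⟩
    rw [abs_of_neg (sub_neg.2 ht.2), abs_of_neg (sub_neg.2 h)]
    linarith [ht.1]

theorem apK_coe {K : Set ℝ} (f : Equiv.Perm K) (x : K) : apK K f x = f x := by
  simp [apK]

theorem IsD1Lip.exists_nhds {K : Set ℝ} {f : Equiv.Perm K} (hf : IsD1Lip K f) (x : K) :
    ∃ V ∈ 𝓝 x, (StrictMonoOn f V ∨ StrictAntiOn f V) ∧
      ∃ C : ℝ, ∀ p ∈ V, ∀ y ∈ V, ∀ z ∈ V, SlopeBound f C p y z := by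
  obtain ⟨a, b, hx, F, F', hd, -, hinj, ⟨C, hC⟩, hFK⟩ := hf x
  have hFK' : ∀ y : K, (y : ℝ) ∈ Ioo a b → F y = f y := fun y hy ↦ by
    rw [hFK y hy y.2, apK_coe]
  refine ⟨(↑) ⁻¹' Ioo a b, continuous_subtype_val.continuousAt.preimage_mem_nhds
    (isOpen_Ioo.mem_nhds hx), ?_, C, ?_⟩
  · have hcont : ContinuousOn F (Ioo a b) := fun t ht ↦
      (hd t ht).1.continuousAt.continuousWithinAt
    refine (hcont.strictMonoOn_of_injOn_Ioo (hx.1.trans hx.2) hinj).imp ?_ ?_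
    all_goals
      intro h y hy z hz hyz
      have := h hy hz hyz
      rwa [hFK' y hy, hFK' z hz] at this
  · intro p hp y hy z hz
    obtain ⟨t, ht, e, htp⟩ := exists_dist_eq_abs_deriv_mul_dist (fun t ht ↦ (hd t ht).1) hp hy
    obtain ⟨u, hu, e', hup⟩ := exists_dist_eq_abs_deriv_mul_dist (fun t ht ↦ (hd t ht).1) hp hz
    rw [hFK' p hp] at e e'
    rw [hFK' y hy] at e
    rw [hFK' z hz] at e'
    have ht0 : 0 < |F' t| := abs_pos.2 (hd t ht).2
    have hu0 : 0 < |F' u| := abs_pos.2 (hd u hu).2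
    have hlog : Real.log |F' t| - Real.log |F' u| ≤ C * (dist y p + dist z p) := by
      have h1 := hC.dist_le_mul t ht u hu
      have h2 : dist t u ≤ dist (y : ℝ) p + dist (z : ℝ) p :=
        (dist_triangle_right t u p).trans (add_le_add htp hup)
      have h3 := mul_le_mul_of_nonneg_left h2 C.2
      exact (le_abs_self _).trans (h1.trans h3)
    have hle : |F' t| ≤ Real.exp (C * (dist y p + dist z p)) * |F' u| := by
      calc |F' t| = Real.exp (Real.log |F' t|) := (Real.exp_log ht0).symm
        _ ≤ Real.exp (C * (dist y p + dist z p) + Real.log |F' u|) :=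
          Real.exp_le_exp.2 (by linarith)
        _ = _ := by rw [Real.exp_add, Real.exp_log hu0]
    unfold SlopeBound
    rw [Subtype.dist_eq (f y), Subtype.dist_eq (f z), e, e', ← Subtype.dist_eq, ← Subtype.dist_eq]
    calc |F' t| * dist y p * dist z p
        ≤ Real.exp (C * (dist y p + dist z p)) * |F' u| * dist y p * dist z p := by gcongr
      _ = _ := by ring

/-- At scale `ε` near `p`, the map `f` has slopes controlled with constant `1 / ε` and reflects
betweenness. -/
def ControlledAt {K : Set ℝ} (f : K → K) (ε : ℝ) (p : K) : Prop :=
  (∀ y z : K, dist y p < ε → dist z p < ε → SlopeBound f ε⁻¹ p y z) ∧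
  ∀ y w : K, dist y p < ε → (f w - f p : ℝ) * (f w - f y) < 0 → (w - p : ℝ) * (w - y) < 0

theorem SlopeBound.mono {K : Set ℝ} {f : K → K} {C C' : ℝ} {p y z : K} (h : SlopeBound f C p y z)
    (hC : C ≤ C') : SlopeBound f C' p y z := by
  unfold SlopeBound at *
  exact h.trans (by gcongr)

theorem MemDiffLip.eventually_controlledAt_nhds {K : Set ℝ} {f : Equiv.Perm K}
    (hf : MemDiffLip K f) (x : K) : ∀ᶠ q in 𝓝[>] (0 : ℝ) ×ˢ 𝓝 x, ControlledAt f q.1 q.2 := by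
  obtain ⟨hc, hc', hD⟩ := hf
  obtain ⟨V, hV, hmono, C, hC⟩ := hD.exists_nhds x
  have himg : ∀ᶠ u in 𝓝 (f x), f.symm u ∈ V :=
    hc'.continuousAt.eventually_mem (by simpa using hV)
  obtain ⟨ρ, hρ, hρV⟩ := Metric.eventually_nhds_iff.1 himg
  have hW : V ∩ f ⁻¹' Metric.ball (f x) ρ ∈ 𝓝 x :=
    inter_mem hV (hc.continuousAt.preimage_mem_nhds (Metric.ball_mem_nhds _ hρ))
  obtain ⟨r, hr, hrW⟩ := Metric.mem_nhds_iff.1 hW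
  have hε : ∀ᶠ ε in 𝓝[>] (0 : ℝ), 0 < ε ∧ ε < r / 2 ∧ C ≤ ε⁻¹ := by
    filter_upwards [self_mem_nhdsWithin, nhdsWithin_le_nhds (Iio_mem_nhds (half_pos hr)),
      tendsto_inv_nhdsGT_zero.eventually_ge_atTop C] with ε h1 h2 h3 using ⟨h1, h2, h3⟩
  filter_upwards [hε.prod_mk (Metric.ball_mem_nhds x (half_pos hr))] with ⟨ε, p⟩ ⟨⟨h0, hεr, hCε⟩, hp⟩
  replace hp : dist p x < r / 2 := hp
  dsimp only at h0 hεr hCε ⊢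
  have hnear : ∀ y : K, dist y p < ε → y ∈ V ∧ dist (f y) (f x) < ρ := fun y hy ↦ by
    have : y ∈ Metric.ball x r := by
      rw [Metric.mem_ball]
      linarith [dist_triangle y p x]
    exact hrW this
  have hpn := hnear p (by simpa using h0)
  refine ⟨fun y z hy hz ↦ (hC p hpn.1 y (hnear y hy).1 z (hnear z hz).1).mono hCε, ?_⟩
  intro y w hy hw
  have hyn := hnear y hy
  have hwV : w ∈ V := by
    have : dist (f w) (f x) < ρ := by
      have h1 := hpn.2
      have h2 := hyn.2
      rw [Subtype.dist_eq, Real.dist_eq, abs_lt] at h1 h2 ⊢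
      rcases mul_neg_iff.1 hw with h | h <;> constructor <;> linarith
    simpa using hρV this
  have coe : ∀ u v : K, (u - v : ℝ) < 0 ↔ u < v := fun u v ↦ by simp
  have coe' : ∀ u v : K, 0 < (u - v : ℝ) ↔ v < u := fun u v ↦ by simp
  rw [mul_neg_iff, coe, coe, coe', coe'] at hw ⊢
  rcases hmono with h | h
  · simpa only [h.lt_iff_lt hwV hpn.1, h.lt_iff_lt hwV hyn.1, h.lt_iff_lt hyn.1 hwV,
      h.lt_iff_lt hpn.1 hwV] using hw
  · rw [h.lt_iff_gt hwV hpn.1, h.lt_iff_gt hwV hyn.1, h.lt_iff_gt hyn.1 hwV,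
      h.lt_iff_gt hpn.1 hwV] at hw
    exact hw.symm

theorem MemDiffLip.eventually_controlledAt {K : Set ℝ} (hK : IsCompact K) {f : Equiv.Perm K}
    (hf : MemDiffLip K f) : ∀ᶠ ε in 𝓝[>] (0 : ℝ), ∀ p : K, ControlledAt f ε p := by
  have : CompactSpace K := isCompact_iff_compactSpace.1 hK
  have h : ∀ᶠ q in 𝓝[>] (0 : ℝ) ×ˢ 𝓝ˢ (univ : Set K), ControlledAt f q.1 q.2 :=
    isCompact_univ.mem_prod_nhdsSet_of_forall fun x _ ↦ hf.eventually_controlledAt_nhds x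
  rw [nhdsSet_univ] at h
  obtain ⟨s, hs, t, ht, hst⟩ := Filter.mem_prod_iff.1 h
  rw [mem_top] at ht
  filter_upwards [hs] with ε hε p
  exact hst (mk_mem_prod hε (ht ▸ mem_univ p))

/-- The elements of `Γ` that fix every point of some neighbourhood of `x`. -/
def germStabilizer (Γ : Type*) {X : Type*} [TopologicalSpace X] [Group Γ] [MulAction Γ X] (x : X) :
    Subgroup Γ where
  carrier := {g | ∀ᶠ y in 𝓝 x, g • y = y}
  one_mem' := by simp
  mul_mem' {g h} hg hh := by
    filter_upwards [hg, hh] with y h1 h2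
    rw [mul_smul, h2, h1]
  inv_mem' {g} hg := by
    filter_upwards [hg] with y h1
    rw [inv_smul_eq_iff, h1]

theorem mem_germStabilizer {Γ X : Type*} [TopologicalSpace X] [Group Γ] [MulAction Γ X] {x : X}
    {g : Γ} : g ∈ germStabilizer Γ x ↔ ∀ᶠ y in 𝓝 x, g • y = y := Iff.rfl

section LocallyMonotone

variable {Γ X : Type*} [LinearOrder X] [TopologicalSpace X] [Group Γ] [MulAction Γ X]
  [ContinuousConstSMul Γ X]

theorem IsOfFinOrder.mem_germStabilizer {g : Γ} (hg : IsOfFinOrder g) {x : X} (hx : g • x = x)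
    {V : Set X} (hV : V ∈ 𝓝 x) (hmono : StrictMonoOn (g • · : X → X) V) :
    g ∈ germStabilizer Γ x := by
  have hpow : ∀ i : ℕ, g ^ i • x = x := fun i ↦
    pow_mem (show g ∈ stabilizer Γ x from hx) i
  have hev : ∀ᶠ y in 𝓝 x, ∀ i ∈ Finset.range (orderOf g), g ^ i • y ∈ V := by
    rw [Filter.eventually_all_finset]
    intro i _
    exact (continuous_const_smul (g ^ i)).continuousAt.eventually_mem (by rwa [hpow])
  filter_upwards [hev] with y hy
  have hall : ∀ i : ℕ, g ^ i • y ∈ V := fun i ↦ by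
    rw [← pow_mod_orderOf]
    exact hy _ (Finset.mem_range.2 (Nat.mod_lt _ hg.orderOf_pos))
  have hs : ∀ i : ℕ, g ^ (i + 1) • y = g • g ^ i • y := fun i ↦ by rw [pow_succ', mul_smul]
  rcases lt_trichotomy (g • y) y with h | h | h
  · have hanti : StrictAnti fun i : ℕ ↦ g ^ i • y := strictAnti_nat_of_succ_lt fun i ↦ by
      induction i with
      | zero => simpa using h
      | succ i ih => simpa only [hs] using hmono (hall (i + 1)) (hall i) ih
    simpa [pow_orderOf_eq_one] using hanti hg.orderOf_pos
  · exact h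
  · have hmono' : StrictMono fun i : ℕ ↦ g ^ i • y := strictMono_nat_of_lt_succ fun i ↦ by
      induction i with
      | zero => simpa using h
      | succ i ih => simpa only [hs] using hmono (hall i) (hall (i + 1)) ih
    simpa [pow_orderOf_eq_one] using hmono' hg.orderOf_pos

theorem germStabilizer_finiteIndex (htors : ∀ g : Γ, IsOfFinOrder g) {x : X}
    (hloc : ∀ g : Γ, ∃ V ∈ 𝓝 x, StrictMonoOn (g • · : X → X) V ∨ StrictAntiOn (g • · : X → X) V)
    (hx : (orbit Γ x).Finite) : (germStabilizer Γ x).FiniteIndex := by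
  have hle : germStabilizer Γ x ≤ stabilizer Γ x := fun g hg ↦
    (mem_germStabilizer.1 hg).self_of_nhds
  have hindex : (stabilizer Γ x).index ≠ 0 := by
    rw [index_stabilizer]
    exact ((Set.ncard_pos hx).2 (nonempty_orbit x)).ne'
  have hmul : ∀ a b : Γ, a ∈ stabilizer Γ x → b ∈ stabilizer Γ x → a ∉ germStabilizer Γ x →
      b ∉ germStabilizer Γ x → a * b ∈ germStabilizer Γ x := by
    intro a b ha hb ha' hb'
    have hanti : ∀ c : Γ, c ∈ stabilizer Γ x → c ∉ germStabilizer Γ x →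
        ∃ V ∈ 𝓝 x, StrictAntiOn (c • · : X → X) V := fun c hc hc' ↦ by
      obtain ⟨V, hV, h | h⟩ := hloc c
      · exact absurd ((htors c).mem_germStabilizer hc hV h) hc'
      · exact ⟨V, hV, h⟩
    obtain ⟨V, hV, hVa⟩ := hanti a ha ha'
    obtain ⟨W, hW, hWb⟩ := hanti b hb hb'
    have hbV : (b • · : X → X) ⁻¹' V ∈ 𝓝 x :=
      (continuous_const_smul b).continuousAt.preimage_mem_nhds
        (by rwa [show b • x = x from hb])
    refine (htors _).mem_germStabilizer (mul_mem ha hb) (inter_mem hW hbV) ?_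
    intro y hy z hz hyz
    simp only [mul_smul]
    exact hVa hz.2 hy.2 (hWb hy.1 hz.1 hyz)
  rw [Subgroup.finiteIndex_iff, ← Subgroup.relIndex_mul_index hle]
  refine mul_ne_zero ?_ hindex
  by_cases heq : stabilizer Γ x ≤ germStabilizer Γ x
  · rw [Subgroup.relIndex_eq_one.2 heq]
    exact one_ne_zero
  · obtain ⟨a, ha, ha'⟩ := SetLike.not_le_iff_exists.1 heq
    have : (germStabilizer Γ x).relIndex (stabilizer Γ x) = 2 := by
      rw [Subgroup.relIndex_eq_two_iff]
      refine ⟨a, ha, fun b hb ↦ ?_⟩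
      by_cases hbx : b ∈ germStabilizer Γ x
      · exact Or.inr ⟨hbx, fun h ↦ ha' ((Subgroup.mul_mem_cancel_left _ hbx).1 h)⟩
      · exact Or.inl ⟨hmul b a hb ha hbx ha', hbx⟩
    rw [this]
    exact two_ne_zero

end LocallyMonotone

theorem exists_isClopen_invariant_of_germStabilizer_finiteIndex {Γ X : Type*} [TopologicalSpace X]
    [T2Space X] [CompactSpace X] [TotallyDisconnectedSpace X] [Group Γ] [Group.FG Γ]
    [MulAction Γ X] [ContinuousConstSMul Γ X] (x : X) [(germStabilizer Γ x).FiniteIndex] :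
    ∃ U : Set X, IsClopen U ∧ x ∈ U ∧ (∀ (g : Γ), ∀ y ∈ U, g • y ∈ U) ∧
      (range fun (g : Γ) (y : U) ↦ g • (y : X)).Finite := by
  set H := germStabilizer Γ x with hH
  obtain ⟨T, hT⟩ := (Group.fg_iff_subgroup_fg H).1 inferInstance
  have hW : ∀ᶠ y in 𝓝 x, ∀ t ∈ T, t • y = y := by
    rw [Filter.eventually_all_finset]
    intro t ht
    have : t ∈ H := hT.le (Subgroup.subset_closure ht)
    exact mem_germStabilizer.1 this
  have hW' : ∀ᶠ y in 𝓝 x, ∀ h ∈ H, h • y = y := by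
    filter_upwards [hW] with y hy h hh
    have : H ≤ stabilizer Γ y := by
      rw [← hT, Subgroup.closure_le]
      exact fun t ht ↦ hy t ht
    exact this hh
  obtain ⟨O, hO, hOopen, hxO⟩ := eventually_nhds_iff.1 hW'
  obtain ⟨V, hV, hxV, hVO⟩ := compact_exists_isClopen_in_isOpen hOopen hxO
  have hcoset : ∀ g k : Γ, (g : Γ ⧸ H) = k → ∀ y ∈ V, g • y = k • y := by
    intro g k hgk y hy
    have := hO y (hVO hy) _ (QuotientGroup.eq.1 hgk)
    rw [mul_smul, inv_smul_eq_iff] at this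
    exact this.symm
  have : Finite (Γ ⧸ H) := inferInstance
  have hfin : (range fun g : Γ ↦ g • V).Finite := by
    have hfac : (fun g : Γ ↦ g • V).FactorsThrough (QuotientGroup.mk : Γ → Γ ⧸ H) :=
      fun g k hgk ↦ image_congr (hcoset g k hgk)
    rw [← hfac.extend_comp fun _ ↦ ∅]
    exact (Set.finite_range _).subset (range_comp_subset_range _ _)
  refine ⟨⋃₀ range fun g : Γ ↦ g • V, ?_, ⟨_, ⟨1, rfl⟩, by simpa using hxV⟩, ?_, ?_⟩
  · rw [sUnion_eq_biUnion]
    refine hfin.isClopen_biUnion ?_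
    rintro _ ⟨g, rfl⟩
    exact ⟨hV.1.smul g, hV.2.smul g⟩
  · rintro g _ ⟨_, ⟨k, rfl⟩, z, hz, rfl⟩
    exact ⟨_, ⟨g * k, rfl⟩, z, hz, mul_smul g k z⟩
  · set U := ⋃₀ range fun g : Γ ↦ g • V
    have hfac : (fun (g : Γ) (y : U) ↦ g • (y : X)).FactorsThrough
        (fun (g : Γ) (q : Γ ⧸ H) ↦ g • q) := by
      intro g k hgk
      funext ⟨_, _, ⟨l, rfl⟩, z, hz, rfl⟩
      change g • l • z = k • l • z
      rw [← mul_smul, ← mul_smul]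
      exact hcoset _ _ (congrFun hgk (l : Γ ⧸ H)) z hz
    rw [← hfac.extend_comp fun _ (y : U) ↦ (y : X)]
    exact (Set.finite_range _).subset (range_comp_subset_range _ _)

theorem exists_minimal_invariant (Γ : Type*) {X : Type*} [TopologicalSpace X] [CompactSpace X]
    [Group Γ] [MulAction Γ X] [ContinuousConstSMul Γ X] {B : Set X} (hB : IsClosed B)
    (hne : B.Nonempty) (hinv : ∀ g : Γ, ∀ x ∈ B, g • x ∈ B) :
    ∃ M ⊆ B, IsClosed M ∧ M.Nonempty ∧ (∀ g : Γ, ∀ x ∈ M, g • x ∈ M) ∧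
      ∀ x ∈ M, M ⊆ closure (orbit Γ x) := by
  obtain ⟨M, hMB, hM⟩ := zorn_superset_nonempty
    {A : Set X | IsClosed A ∧ A.Nonempty ∧ ∀ g : Γ, ∀ x ∈ A, g • x ∈ A} (by
      intro c hc hchain hcne
      refine ⟨⋂₀ c, ⟨isClosed_sInter fun A hA ↦ (hc hA).1, ?_, ?_⟩, fun A ↦ sInter_subset_of_mem⟩
      · have : Nonempty c := hcne.to_subtype
        exact IsCompact.nonempty_sInter_of_directed_nonempty_isCompact_isClosed
          (fun A hA A' hA' ↦ (hchain.total hA hA').elim (fun h ↦ ⟨A, hA, le_rfl, h⟩)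
            fun h ↦ ⟨A', hA', h, le_rfl⟩) (fun A hA ↦ (hc hA).2.1)
          (fun A hA ↦ (hc hA).1.isCompact) (fun A hA ↦ (hc hA).1)
      · exact fun g x hx A hA ↦ (hc hA).2.2 g x (hx A hA)) B ⟨hB, hne, hinv⟩
  obtain ⟨hMc, hMne, hMinv⟩ := hM.prop
  refine ⟨M, hMB, hMc, hMne, hMinv, fun x hx ↦ ?_⟩
  have horb : orbit Γ x ⊆ M := by
    rintro _ ⟨g, rfl⟩
    exact hMinv g x hx
  refine hM.le_of_le ⟨isClosed_closure, (nonempty_orbit x).closure, fun g ↦ ?_⟩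
    (closure_minimal horb hMc)
  refine MapsTo.closure (fun y hy ↦ ?_) (continuous_const_smul g)
  exact mem_orbit_of_mem_orbit g hy

theorem sum_sub_le_of_pairwiseDisjoint_Ioo {ι : Type*} (T : Finset ι) {a b : ι → ℝ} {m n : ℝ}
    (hab : ∀ i ∈ T, a i ≤ b i) (hm : ∀ i ∈ T, m ≤ a i) (hn : ∀ i ∈ T, b i ≤ n) (hmn : m ≤ n)
    (hdisj : (T : Set ι).PairwiseDisjoint fun i ↦ Ioo (a i) (b i)) :
    ∑ i ∈ T, (b i - a i) ≤ n - m := by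
  have h := MeasureTheory.measure_biUnion_finset (μ := MeasureTheory.volume) hdisj
    fun i _ ↦ measurableSet_Ioo
  have hsub : ⋃ i ∈ T, Ioo (a i) (b i) ⊆ Icc m n :=
    iUnion₂_subset fun i hi t ht ↦ ⟨(hm i hi).trans ht.1.le, ht.2.le.trans (hn i hi)⟩
  have hle := MeasureTheory.measure_mono (μ := MeasureTheory.volume) hsub
  simp only [h, Real.volume_Ioo, Real.volume_Icc] at hle
  rwa [← ENNReal.ofReal_sum_of_nonneg fun i hi ↦ sub_nonneg.2 (hab i hi),
    ENNReal.ofReal_le_ofReal_iff (sub_nonneg.2 hmn)] at hle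

/-- The pairs of endpoints, in either order, of the bounded gaps of `M`. -/
def gaps {K : Set ℝ} (M : Set K) : Set (K × K) :=
  {w | w.1 ∈ M ∧ w.2 ∈ M ∧ w.1 ≠ w.2 ∧ ∀ c ∈ M, 0 ≤ (c - w.1 : ℝ) * (c - w.2)}

section Gaps

variable {K : Set ℝ} {M : Set K}

theorem swap_mem_gaps {w : K × K} (hw : w ∈ gaps M) : w.swap ∈ gaps M :=
  ⟨hw.2.1, hw.1, hw.2.2.1.symm, fun c hc ↦ mul_comm _ (c - w.2 : ℝ) ▸ hw.2.2.2 c hc⟩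

theorem eq_of_mem_gaps_of_mem_Ioo {w w' : K × K} (hw : w ∈ gaps M) (hw' : w' ∈ gaps M) {t : ℝ}
    (ht : t ∈ Ioo (w.1 : ℝ) w.2) (ht' : t ∈ Ioo (w'.1 : ℝ) w'.2) : w = w' := by
  have key : ∀ v v' : K × K, v ∈ gaps M → v' ∈ gaps M → t ∈ Ioo (v.1 : ℝ) v.2 →
      t ∈ Ioo (v'.1 : ℝ) v'.2 → v.1 ≤ v'.1 ∧ v'.2 ≤ v.2 := by
    intro v v' hv hv' h h'
    have h1 := hv'.2.2.2 _ hv.1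
    have h2 := hv'.2.2.2 _ hv.2.1
    constructor
    · by_contra! hlt
      have hlt' : (v'.1 : ℝ) < v.1 := hlt
      nlinarith [h.1, h'.2]
    · by_contra! hlt
      have hlt' : (v.2 : ℝ) < v'.2 := hlt
      nlinarith [h.2, h'.1]
  have h1 := key w w' hw hw' ht ht'
  have h2 := key w' w hw' hw ht' ht
  exact Prod.ext (le_antisymm h1.1 h2.1) (le_antisymm h2.2 h1.2)

theorem exists_sum_dist_le_of_subset_gaps (hK : IsCompact K) :
    ∃ L : ℝ, ∀ T : Finset (K × K), (T : Set (K × K)) ⊆ gaps M → ∑ w ∈ T, dist w.1 w.2 ≤ L := by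
  classical
  obtain ⟨m, hm⟩ := hK.bddBelow
  obtain ⟨n, hn⟩ := hK.bddAbove
  refine ⟨|n - m| + |n - m|, fun T hT ↦ ?_⟩
  rcases T.eq_empty_or_nonempty with rfl | ⟨w₀, -⟩
  · simp
  have hmn : m ≤ n := (hm w₀.1.2).trans (hn w₀.1.2)
  rw [← Finset.sum_filter_add_sum_filter_not T fun w ↦ w.1 < w.2]
  refine add_le_add (le_trans ?_ (le_abs_self _)) (le_trans ?_ (le_abs_self _))
  · calc ∑ w ∈ T with w.1 < w.2, dist w.1 w.2
        = ∑ w ∈ T with w.1 < w.2, ((w.2 : ℝ) - w.1) := by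
          refine Finset.sum_congr rfl fun w hw ↦ ?_
          have : (w.1 : ℝ) < w.2 := (Finset.mem_filter.1 hw).2
          rw [dist_comm, Subtype.dist_eq, Real.dist_eq, abs_of_pos (sub_pos.2 this)]
      _ ≤ n - m := by
        refine sum_sub_le_of_pairwiseDisjoint_Ioo _ (fun w hw ↦ ?_) (fun w _ ↦ hm w.1.2)
          (fun w _ ↦ hn w.2.2) hmn fun w hw w' hw' hne ↦ ?_
        · exact (Finset.mem_filter.1 hw).2.le
        · refine Set.disjoint_left.2 fun t ht ht' ↦ hne ?_
          exact eq_of_mem_gaps_of_mem_Ioo (hT (Finset.mem_filter.1 hw).1)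
            (hT (Finset.mem_filter.1 hw').1) ht ht'
  · calc ∑ w ∈ T with ¬ w.1 < w.2, dist w.1 w.2
        = ∑ w ∈ T with ¬ w.1 < w.2, ((w.1 : ℝ) - w.2) := by
          refine Finset.sum_congr rfl fun w hw ↦ ?_
          have : (w.2 : ℝ) ≤ w.1 := not_lt.1 (Finset.mem_filter.1 hw).2
          rw [Subtype.dist_eq, Real.dist_eq, abs_of_nonneg (sub_nonneg.2 this)]
      _ ≤ n - m := by
        refine sum_sub_le_of_pairwiseDisjoint_Ioo _ (fun w hw ↦ ?_) (fun w _ ↦ hm w.2.2)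
          (fun w _ ↦ hn w.1.2) hmn fun w hw w' hw' hne ↦ ?_
        · exact not_lt.1 (Finset.mem_filter.1 hw).2
        · refine Set.disjoint_left.2 fun t ht ht' ↦ hne ?_
          exact Prod.swap_injective (eq_of_mem_gaps_of_mem_Ioo
            (swap_mem_gaps (hT (Finset.mem_filter.1 hw).1))
            (swap_mem_gaps (hT (Finset.mem_filter.1 hw').1)) ht ht')

theorem finite_gaps_le_dist (hK : IsCompact K) {ε : ℝ} (hε : 0 < ε) :
    {w ∈ gaps M | ε ≤ dist w.1 w.2}.Finite := by
  obtain ⟨L, hL⟩ := exists_sum_dist_le_of_subset_gaps (M := M) hK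
  by_contra hinf
  obtain ⟨n, hn⟩ := exists_nat_gt (L / ε)
  obtain ⟨T, hT, rfl⟩ := Set.Infinite.exists_subset_card_eq hinf n
  have h1 := hL T fun w hw ↦ (hT hw).1
  have h2 := Finset.card_nsmul_le_sum T (fun w ↦ dist w.1 w.2) ε fun w hw ↦ (hT hw).2
  rw [nsmul_eq_mul] at h2
  rw [div_lt_iff₀ hε] at hn
  linarith

theorem exists_gap_between (hK : IsCompact K) (hdisc : IsTotallyDisconnected K) (hM : IsClosed M)
    {x y : K} (hx : x ∈ M) (hy : y ∈ M) (hxy : x < y) :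
    ∃ w ∈ gaps M, x ≤ w.1 ∧ w.1 < w.2 ∧ w.2 ≤ y := by
  have : CompactSpace K := isCompact_iff_compactSpace.1 hK
  obtain ⟨t, ht, htK⟩ : ∃ t ∈ Icc (x : ℝ) y, t ∉ K := by
    by_contra! hsub
    have := hdisc (Icc (x : ℝ) y) hsub isPreconnected_Icc
      (left_mem_Icc.2 hxy.le) (right_mem_Icc.2 hxy.le)
    exact hxy.ne (Subtype.ext this)
  have hlo : IsClosed (M ∩ {c : K | (c : ℝ) ≤ t}) :=
    hM.inter (isClosed_le continuous_subtype_val continuous_const)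
  have hhi : IsClosed (M ∩ {c : K | t ≤ (c : ℝ)}) :=
    hM.inter (isClosed_le continuous_const continuous_subtype_val)
  obtain ⟨a, ⟨haM, hat⟩, ha⟩ := hlo.isCompact.exists_isGreatest ⟨x, hx, ht.1⟩
  obtain ⟨b, ⟨hbM, hbt⟩, hb⟩ := hhi.isCompact.exists_isLeast ⟨y, hy, ht.2⟩
  have hat' : (a : ℝ) < t := lt_of_le_of_ne hat fun h ↦ htK (h ▸ a.2)
  have hbt' : t < (b : ℝ) := lt_of_le_of_ne hbt fun h ↦ htK (h ▸ b.2)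
  have hab : a < b := hat'.trans hbt'
  refine ⟨(a, b), ⟨haM, hbM, hab.ne, fun c hc ↦ ?_⟩, ha ⟨hx, ht.1⟩, hab, hb ⟨hy, ht.2⟩⟩
  have hab' : (a : ℝ) ≤ b := hab.le
  rcases le_total (c : ℝ) t with h | h
  · have : (c : ℝ) ≤ a := ha ⟨hc, h⟩
    exact mul_nonneg_of_nonpos_of_nonpos (sub_nonpos.2 this) (sub_nonpos.2 (this.trans hab'))
  · have : (b : ℝ) ≤ c := hb ⟨hc, h⟩
    exact mul_nonneg (sub_nonneg.2 (hab'.trans this)) (sub_nonneg.2 this)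

theorem infinite_gaps (hK : IsCompact K) (hdisc : IsTotallyDisconnected K) (hM : IsClosed M)
    (hinf : M.Infinite) : (gaps M).Infinite := by
  intro hfin
  refine hinf (Set.Finite.of_finite_image (f := fun x : K ↦ {w ∈ gaps M | w.2 ≤ x})
    (hfin.finite_subsets.subset ?_) ?_)
  · rintro _ ⟨x, -, rfl⟩
    exact sep_subset _ _
  · have key : ∀ x ∈ M, ∀ y ∈ M, x < y → {w ∈ gaps M | w.2 ≤ x} ≠ {w ∈ gaps M | w.2 ≤ y} := by
      intro x hx y hy hxy h
      obtain ⟨w, hw, h1, h2, h3⟩ := exists_gap_between hK hdisc hM hx hy hxy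
      have : w ∈ {w ∈ gaps M | w.2 ≤ x} := h ▸ ⟨hw, h3⟩
      exact (this.2.trans h1).not_gt h2
    intro x hx y hy h
    rcases lt_trichotomy x y with hlt | rfl | hlt
    · exact absurd h (key x hx y hy hlt)
    · rfl
    · exact absurd h.symm (key y hy x hx hlt)

end Gaps

section GapGraph

variable {K : Set ℝ} {Γ : Type*} [Group Γ] [MulAction Γ K] {M : Set K} {S : Set Γ} {ε : ℝ}

/-- The gaps of `M` of length less than `ε`. -/
def smallGaps (M : Set K) (ε : ℝ) : Set (K × K) := {w ∈ gaps M | dist w.1 w.2 < ε}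

/-- The graph of the partial action of `S` on the gaps of `M` of length less than `ε`. -/
def gapGraph (M : Set K) (S : Set Γ) (ε : ℝ) : SimpleGraph (K × K) :=
  SimpleGraph.fromRel fun v w ↦ v ∈ smallGaps M ε ∧ w ∈ smallGaps M ε ∧ ∃ s ∈ S, s • v = w

theorem gapGraph_adj (hS : ∀ s ∈ S, s⁻¹ ∈ S) {v w : K × K} :
    (gapGraph M S ε).Adj v w ↔
      v ≠ w ∧ v ∈ smallGaps M ε ∧ w ∈ smallGaps M ε ∧ ∃ s ∈ S, s • v = w := by
  rw [gapGraph, SimpleGraph.fromRel_adj]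
  refine and_congr_right fun _ ↦ ⟨?_, Or.inl⟩
  rintro (h | ⟨hw, hv, s, hs, rfl⟩)
  · exact h
  · exact ⟨hv, hw, s⁻¹, hS s hs, inv_smul_smul s w⟩

theorem mem_smallGaps_of_walk (hS : ∀ s ∈ S, s⁻¹ ∈ S) {u v : K × K} (p : (gapGraph M S ε).Walk u v)
    (hu : u ∈ smallGaps M ε) : ∀ w ∈ p.support, w ∈ smallGaps M ε := by
  induction p with
  | nil => simpa using hu
  | cons h p ih =>
    have h' := (gapGraph_adj hS).1 h
    intro w hw
    rw [SimpleGraph.Walk.support_cons, List.mem_cons] at hw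
    rcases hw with rfl | hw
    · exact hu
    · exact ih h'.2.2.1 w hw

theorem mem_smallGaps_of_reachable (hS : ∀ s ∈ S, s⁻¹ ∈ S) {u v : K × K}
    (h : (gapGraph M S ε).Reachable u v) (hu : u ∈ smallGaps M ε) : v ∈ smallGaps M ε := by
  obtain ⟨p⟩ := h
  exact mem_smallGaps_of_walk hS p hu v p.end_mem_support

theorem smul_mem_gaps (hinv : ∀ g : Γ, ∀ x ∈ M, g • x ∈ M) {s : Γ} {w : K × K}
    (hs : ControlledAt (s • · : K → K) ε w.1) (hw : w ∈ smallGaps M ε) : s • w ∈ gaps M := by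
  refine ⟨hinv s _ hw.1.1, hinv s _ hw.1.2.1, fun h ↦ hw.1.2.2.1 (smul_left_cancel s h), ?_⟩
  intro c hc
  by_contra! hlt
  have h1 := hs.2 w.2 (s⁻¹ • c) (by rw [dist_comm]; exact hw.2)
    (by
      change (((s • s⁻¹ • c : K) : ℝ) - (s • w).1) * (((s • s⁻¹ • c : K) : ℝ) - (s • w).2) < 0
      rwa [smul_inv_smul])
  exact h1.not_ge (hw.1.2.2.2 _ (hinv s⁻¹ c hc))

theorem exists_smul_eq_of_walk (hS : ∀ s ∈ S, s⁻¹ ∈ S) (hε : 0 < ε)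
    (hctrl : ∀ s ∈ S, ∀ p : K, ControlledAt (s • · : K → K) ε p) {u v : K × K}
    (p : (gapGraph M S ε).Walk u v) :
    ∃ g : Γ, g • u = v ∧ ∀ y : K,
      dist y u.1 * Real.exp (2 * ε⁻¹ * (p.support.map fun w ↦ dist w.1 w.2).sum) ≤ dist u.1 u.2 →
      dist (g • y) v.1 * dist u.1 u.2 ≤
        Real.exp (2 * ε⁻¹ * (p.support.map fun w ↦ dist w.1 w.2).sum) *
          (dist v.1 v.2 * dist y u.1) := by
  induction p with
  | nil =>
    refine ⟨1, one_smul _ _, fun y _ ↦ ?_⟩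
    rw [one_smul, mul_comm (dist y _)]
    refine le_mul_of_one_le_left (by positivity) (Real.one_le_exp ?_)
    simp only [SimpleGraph.Walk.support_nil, List.map_cons, List.map_nil, List.sum_cons,
      List.sum_nil]
    positivity
  | @cons u u' v h p ih =>
    obtain ⟨hne, hu, hu', s, hs, rfl⟩ := (gapGraph_adj hS).1 h
    obtain ⟨g, hg, ih⟩ := ih
    refine ⟨g * s, by rw [mul_smul, hg], fun y hy ↦ ?_⟩
    rw [SimpleGraph.Walk.support_cons, List.map_cons, List.sum_cons] at hy ⊢
    set W := (p.support.map fun w ↦ dist w.1 w.2).sum with hW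
    have hW0 : 0 ≤ W := List.sum_nonneg fun a ha ↦ by
      obtain ⟨w, -, rfl⟩ := List.mem_map.1 ha
      exact dist_nonneg
    have hu0 : 0 < dist u.1 u.2 := dist_pos.2 hu.1.2.2.1
    have hyu : dist y u.1 ≤ dist u.1 u.2 := by
      refine le_trans (le_mul_of_one_le_right dist_nonneg (Real.one_le_exp ?_)) hy
      positivity
    have hslope := (hctrl s hs u.1).1 y u.2 (hyu.trans_lt hu.2) (by rw [dist_comm]; exact hu.2)
    have hstep : dist (s • y) (s • u.1) * dist u.1 u.2 ≤
        Real.exp (2 * ε⁻¹ * dist u.1 u.2) * (dist (s • u.1) (s • u.2) * dist y u.1) := by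
      unfold SlopeBound at hslope
      rw [dist_comm u.2 u.1, dist_comm (s • u.2)] at hslope
      refine hslope.trans (mul_le_mul_of_nonneg_right (Real.exp_le_exp.2 ?_) (by positivity))
      have : ε⁻¹ * (dist y u.1 + dist u.1 u.2) ≤ ε⁻¹ * (dist u.1 u.2 + dist u.1 u.2) := by gcongr
      linarith
    have hexp : Real.exp (2 * ε⁻¹ * (dist u.1 u.2 + W)) =
        Real.exp (2 * ε⁻¹ * dist u.1 u.2) * Real.exp (2 * ε⁻¹ * W) := by
      rw [mul_add, Real.exp_add]
    rw [hexp] at hy ⊢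
    have hih := ih (s • y) (by
      change dist (s • y) (s • u.1) * _ ≤ dist (s • u.1) (s • u.2)
      rw [← mul_le_mul_iff_left₀ hu0]
      calc dist (s • y) (s • u.1) * Real.exp (2 * ε⁻¹ * W) * dist u.1 u.2
          = dist (s • y) (s • u.1) * dist u.1 u.2 * Real.exp (2 * ε⁻¹ * W) := by ring
        _ ≤ Real.exp (2 * ε⁻¹ * dist u.1 u.2) * (dist (s • u.1) (s • u.2) * dist y u.1) *
              Real.exp (2 * ε⁻¹ * W) := by gcongr
        _ = dist (s • u.1) (s • u.2) * (dist y u.1 *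
              (Real.exp (2 * ε⁻¹ * dist u.1 u.2) * Real.exp (2 * ε⁻¹ * W))) := by ring
        _ ≤ _ := by gcongr)
    change dist (g • s • y) v.1 * dist (s • u.1) (s • u.2) ≤
      Real.exp (2 * ε⁻¹ * W) * (dist v.1 v.2 * dist (s • y) (s • u.1)) at hih
    have hsu0 : 0 < dist (s • u.1) (s • u.2) := dist_pos.2 hu'.1.2.2.1
    rw [mul_smul, ← mul_le_mul_iff_left₀ hsu0]
    calc dist (g • s • y) v.1 * dist u.1 u.2 * dist (s • u.1) (s • u.2)
        = dist (g • s • y) v.1 * dist (s • u.1) (s • u.2) * dist u.1 u.2 := by ring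
      _ ≤ Real.exp (2 * ε⁻¹ * W) * (dist v.1 v.2 * dist (s • y) (s • u.1)) * dist u.1 u.2 := by
        gcongr
      _ = Real.exp (2 * ε⁻¹ * W) * dist v.1 v.2 * (dist (s • y) (s • u.1) * dist u.1 u.2) := by ring
      _ ≤ Real.exp (2 * ε⁻¹ * W) * dist v.1 v.2 * (Real.exp (2 * ε⁻¹ * dist u.1 u.2) *
            (dist (s • u.1) (s • u.2) * dist y u.1)) := by gcongr
      _ = _ := by ring

theorem exists_uniform_contraction (hK : IsCompact K) (hS : ∀ s ∈ S, s⁻¹ ∈ S) (hε : 0 < ε)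
    (hctrl : ∀ s ∈ S, ∀ p : K, ControlledAt (s • · : K → K) ε p) {u : K × K}
    (hu : u ∈ smallGaps M ε) :
    ∃ δ > 0, ∀ v, (gapGraph M S ε).Reachable u v →
      ∃ g : Γ, ∀ y : K, dist y u.1 ≤ δ → dist (g • y) v.1 ≤ dist v.1 v.2 := by
  classical
  obtain ⟨L, hL⟩ := exists_sum_dist_le_of_subset_gaps (M := M) hK
  have hu0 : 0 < dist u.1 u.2 := dist_pos.2 hu.1.2.2.1
  refine ⟨dist u.1 u.2 / Real.exp (2 * ε⁻¹ * L), by positivity, fun v ⟨p⟩ ↦ ?_⟩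
  obtain ⟨q, hq⟩ := p.toPath
  have hsum : (q.support.map fun w ↦ dist w.1 w.2).sum ≤ L := by
    rw [← List.sum_toFinset _ hq.support_nodup]
    exact hL _ fun w hw ↦ (mem_smallGaps_of_walk hS q hu w (by simpa using hw)).1
  obtain ⟨g, -, hg⟩ := exists_smul_eq_of_walk hS hε hctrl q
  have hexp : Real.exp (2 * ε⁻¹ * (q.support.map fun w ↦ dist w.1 w.2).sum) ≤
      Real.exp (2 * ε⁻¹ * L) := by gcongr
  refine ⟨g, fun y hy ↦ ?_⟩
  rw [le_div_iff₀ (Real.exp_pos _)] at hy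
  have hy' := (mul_le_mul_of_nonneg_left hexp (dist_nonneg (x := y) (y := u.1))).trans hy
  rw [← mul_le_mul_iff_left₀ hu0]
  refine (hg y hy').trans ?_
  rw [mul_left_comm, mul_comm (Real.exp _)]
  exact mul_le_mul_of_nonneg_left hy' dist_nonneg

theorem exists_infinite_component (hK : IsCompact K) (hdisc : IsTotallyDisconnected K)
    (hM : IsClosed M) (hne : M.Nonempty) (hinv : ∀ g : Γ, ∀ x ∈ M, g • x ∈ M)
    (horb : ∀ x ∈ M, (orbit Γ x).Infinite) (hSfin : S.Finite) (hS : ∀ s ∈ S, s⁻¹ ∈ S)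
    (hgen : Submonoid.closure S = ⊤) (hε : 0 < ε)
    (hctrl : ∀ s ∈ S, ∀ p : K, ControlledAt (s • · : K → K) ε p) :
    ∃ u ∈ smallGaps M ε, {v | (gapGraph M S ε).Reachable u v}.Infinite := by
  by_contra! hcomp
  have hMinf : M.Infinite := by
    obtain ⟨x, hx⟩ := hne
    refine (horb x hx).mono ?_
    rintro _ ⟨g, rfl⟩
    exact hinv g x hx
  have hlarge := finite_gaps_le_dist (M := M) hK hε
  have hQ : (⋃ s ∈ S, (s • · : K × K → K × K) ⁻¹' {w ∈ gaps M | ε ≤ dist w.1 w.2}).Finite :=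
    hSfin.biUnion fun s _ ↦ hlarge.preimage (MulAction.injective s).injOn
  have hsmall : (smallGaps M ε).Finite := by
    refine ((hQ.inter_of_right (smallGaps M ε)).biUnion (t := fun v ↦
      {w | (gapGraph M S ε).Reachable v w}) fun v hv ↦ hcomp v hv.1).subset ?_
    intro u hu
    by_contra hnot
    have hstep : ∀ s ∈ S, ∀ v, (gapGraph M S ε).Reachable u v →
        (gapGraph M S ε).Reachable u (s • v) := by
      intro s hs v huv
      have hv := mem_smallGaps_of_reachable hS huv hu
      have hsv := smul_mem_gaps hinv (hctrl s hs v.1) hv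
      by_cases hlt : dist (s • v).1 (s • v).2 < ε
      · by_cases heq : v = s • v
        · rwa [← heq]
        · exact huv.trans ((gapGraph_adj hS).2 ⟨heq, hv, ⟨hsv, hlt⟩, s, hs, rfl⟩).reachable
      · refine absurd (mem_iUnion₂.2 ⟨v, ⟨hv, mem_iUnion₂.2 ⟨s, hs, hsv, not_lt.1 hlt⟩⟩, ?_⟩) hnot
        exact huv.symm
    have hall : ∀ g : Γ, ∀ v, (gapGraph M S ε).Reachable u v →
        (gapGraph M S ε).Reachable u (g • v) := by
      intro g
      have hg : g ∈ Submonoid.closure S := hgen ▸ Submonoid.mem_top g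
      induction hg using Submonoid.closure_induction with
      | mem s hs => exact hstep s hs
      | one => simp
      | mul a b _ _ ha hb =>
        intro v hv
        rw [mul_smul]
        exact ha _ (hb _ hv)
    refine horb u.1 hu.1.1 (((hcomp u hu).image Prod.fst).subset ?_)
    rintro _ ⟨g, rfl⟩
    exact ⟨g • u, hall g u (.refl u), rfl⟩
  refine infinite_gaps hK hdisc hM hMinf ((hsmall.union hlarge).subset fun w hw ↦ ?_)
  rcases lt_or_ge (dist w.1 w.2) ε with h | h
  · exact Or.inl ⟨hw, h⟩
  · exact Or.inr ⟨hw, h⟩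

end GapGraph

theorem orbit_finite {K : Set ℝ} (hK : IsCantorInR K) {Γ : Type*} [Group Γ] [Group.FG Γ]
    [MulAction Γ K] [ContinuousConstSMul Γ K] (htors : ∀ g : Γ, IsOfFinOrder g)
    (hloc : ∀ (g : Γ) (x : K), ∃ V ∈ 𝓝 x,
      StrictMonoOn (g • · : K → K) V ∨ StrictAntiOn (g • · : K → K) V)
    (hctrl : ∀ g : Γ, ∀ᶠ ε in 𝓝[>] (0 : ℝ), ∀ p : K, ControlledAt (g • · : K → K) ε p) (x : K) :
    (orbit Γ x).Finite := by
  obtain ⟨-, hcomp, hdisc, hperf⟩ := hK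
  have : CompactSpace K := isCompact_iff_compactSpace.1 hcomp
  have : TotallyDisconnectedSpace K := totallyDisconnectedSpace_subtype_iff.2 hdisc
  by_contra hx
  have hopen : IsOpen {y : K | (orbit Γ y).Finite} := by
    refine isOpen_iff_mem_nhds.2 fun y hy ↦ ?_
    have := germStabilizer_finiteIndex htors (hloc · y) hy
    obtain ⟨U, hU, hyU, -, hfin⟩ :=
      exists_isClopen_invariant_of_germStabilizer_finiteIndex (Γ := Γ) y
    refine mem_of_superset (hU.2.mem_nhds hyU) fun z hz ↦ ?_
    refine (hfin.image fun φ ↦ φ ⟨z, hz⟩).subset ?_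
    rintro _ ⟨g, rfl⟩
    exact ⟨_, ⟨g, rfl⟩, rfl⟩
  obtain ⟨M, hMB, hM, hne, hinv, hmin⟩ := exists_minimal_invariant Γ hopen.isClosed_compl ⟨x, hx⟩
    fun g y hy ↦ by
      rw [mem_compl_iff, mem_ofPred_eq] at hy ⊢
      rwa [orbit_eq_iff.2 (mem_orbit y g)]
  obtain ⟨T, hT, hTfin⟩ := Group.fg_iff.1 (inferInstance : Group.FG Γ)
  have hgen : Submonoid.closure (T ∪ T⁻¹) = ⊤ := by
    rw [← Subgroup.closure_toSubmonoid, hT, Subgroup.top_toSubmonoid]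
  have hSfin : (T ∪ T⁻¹).Finite := hTfin.union hTfin.inv
  have hS : ∀ s ∈ T ∪ T⁻¹, s⁻¹ ∈ T ∪ T⁻¹ := fun s hs ↦ by
    simpa [or_comm] using hs
  obtain ⟨ε, hε, hctrl⟩ := (((Filter.eventually_all_finite hSfin).2 fun s _ ↦ hctrl s).and
    self_mem_nhdsWithin).exists.imp fun _ ↦ And.symm
  obtain ⟨u, hu, hinf⟩ := exists_infinite_component hcomp hdisc hM hne hinv
    (fun y hy ↦ hMB hy) hSfin hS hgen hε hctrl
  obtain ⟨δ, hδ, hcontr⟩ := exists_uniform_contraction hcomp hS hε hctrl hu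
  obtain ⟨y, hyδ, hyu⟩ : ∃ y : K, dist y u.1 ≤ δ ∧ y ≠ u.1 := by
    obtain ⟨y, hy, hne⟩ := accPt_iff_nhds.1 (hperf.acc u.1 u.1.2) _ (Metric.closedBall_mem_nhds _ hδ)
    exact ⟨⟨y, hy.2⟩, hy.1, fun h ↦ hne (congrArg Subtype.val h)⟩
  have hy0 : 0 < dist y u.1 := dist_pos.2 hyu
  obtain ⟨p, hp⟩ := hinf.exists_accPt_cofinite_inf_principal
  have hpM : p.1 ∈ M := by
    have hcl : p ∈ closure {v | (gapGraph M (T ∪ T⁻¹) ε).Reachable u v} :=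
      mem_closure_iff_clusterPt.2 (hp.clusterPt.mono inf_le_right)
    refine (closure_minimal (fun v hv ↦ ?_) (hM.preimage continuous_fst)) hcl
    exact (mem_smallGaps_of_reachable hS hv hu).1.1
  obtain ⟨_, ⟨h, rfl⟩, hh⟩ := Metric.mem_closure_iff.1 (hmin _ hpM hu.1.1) _ hy0
  have hcont : ∀ᶠ z in 𝓝 p.1, dist (h • z) u.1 < dist y u.1 := by
    refine (continuous_const_smul h).continuousAt.eventually_mem (s := Metric.ball u.1 (dist y u.1))
      (Metric.isOpen_ball.mem_nhds ?_)
    rwa [Metric.mem_ball, dist_comm]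
  obtain ⟨ρ, hρ, hρh⟩ := Metric.eventually_nhds_iff.1 hcont
  obtain ⟨v, hvp, hvl, hv⟩ : ∃ v : K × K, dist v p < ρ / 2 ∧
      v ∉ {w ∈ gaps M | ρ / 2 ≤ dist w.1 w.2} ∧ (gapGraph M (T ∪ T⁻¹) ε).Reachable u v := by
    have h1 : ∀ᶠ v in 𝓝[≠] p, dist v p < ρ / 2 :=
      nhdsWithin_le_nhds (Metric.ball_mem_nhds p (half_pos hρ))
    have h2 : ∀ᶠ v in cofinite ⊓ 𝓟 {v | (gapGraph M (T ∪ T⁻¹) ε).Reachable u v},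
        v ∉ {w ∈ gaps M | ρ / 2 ≤ dist w.1 w.2} ∧ (gapGraph M (T ∪ T⁻¹) ε).Reachable u v :=
      ((finite_gaps_le_dist hcomp (half_pos hρ)).eventually_cofinite_notMem.filter_mono
        inf_le_left).and (mem_inf_of_right (mem_principal_self _))
    have : (𝓝[≠] p ⊓ (cofinite ⊓ 𝓟 {v | (gapGraph M (T ∪ T⁻¹) ε).Reachable u v})).NeBot := hp
    exact ((h1.filter_mono inf_le_left).and (h2.filter_mono inf_le_right)).exists
  obtain ⟨g, hg⟩ := hcontr v hv
  have hvlt : dist v.1 v.2 < ρ / 2 :=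
    not_le.1 fun hle ↦ hvl ⟨(mem_smallGaps_of_reachable hS hv hu).1, hle⟩
  have hf : ∀ z : K, dist z u.1 ≤ δ → dist ((h * g) • z) u.1 < dist y u.1 := by
    intro z hz
    rw [mul_smul]
    apply hρh
    have h1 := hg z hz
    have h2 : dist v.1 p.1 ≤ dist v p := le_max_left _ _
    linarith [dist_triangle (g • z) v.1 p.1]
  have hiter : ∀ n : ℕ, dist ((h * g) ^ (n + 1) • y) u.1 < dist y u.1 := by
    intro n
    induction n with
    | zero => simpa using hf y hyδ
    | succ n ih =>
      rw [pow_succ', mul_smul]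
      exact hf _ (ih.le.trans hyδ)
  have hpos := (htors (h * g)).orderOf_pos
  have := hiter (orderOf (h * g) - 1)
  rw [Nat.sub_add_cancel hpos, pow_orderOf_eq_one, one_smul] at this
  exact this.false

/-- For a finitely generated periodic subgroup `G` of
`diff^{1+Lip}(K)`, every point of `K` has a `G`-invariant clopen neighbourhood
in `K` on which the group of restrictions of elements of `G` is finite. -/
theorem invariant_clopen_neighbourhood (K : Set ℝ) (hK : IsCantorInR K)
    (G : Subgroup (Equiv.Perm K))
    (hdiff : ∀ g ∈ G, MemDiffLip K g)
    (hFG : G.FG)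
    (hper : ∀ g ∈ G, IsOfFinOrder g) :
    ∀ x ∈ K, ∃ U : Set ℝ, U ⊆ K ∧ x ∈ U ∧
      IsClosed U ∧ (∃ V : Set ℝ, IsOpen V ∧ U = V ∩ K) ∧
      (∀ g ∈ G, ∀ y ∈ U, apK K g y ∈ U) ∧
      ((fun g : Equiv.Perm K => U.restrict (apK K g)) '' (G : Set (Equiv.Perm K))).Finite := by
  have hcomp := hK.2.1
  have : CompactSpace K := isCompact_iff_compactSpace.1 hcomp
  have : TotallyDisconnectedSpace K := totallyDisconnectedSpace_subtype_iff.2 hK.2.2.1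
  have : Group.FG G := (Group.fg_iff_subgroup_fg G).2 hFG
  have : ContinuousConstSMul G K := ⟨fun g ↦ (hdiff g g.2).1⟩
  have htors : ∀ g : G, IsOfFinOrder g := fun g ↦ Submonoid.isOfFinOrder_coe.1 (hper g g.2)
  have hloc : ∀ (g : G) (x : K), ∃ V ∈ 𝓝 x,
      StrictMonoOn (g • · : K → K) V ∨ StrictAntiOn (g • · : K → K) V := fun g x ↦ by
    obtain ⟨V, hV, h, -⟩ := (hdiff g g.2).2.2.exists_nhds x
    exact ⟨V, hV, h⟩
  intro x hx
  have hfin : (orbit G (⟨x, hx⟩ : K)).Finite :=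
    orbit_finite hK htors hloc (fun g ↦ (hdiff g g.2).eventually_controlledAt hcomp) _
  have := germStabilizer_finiteIndex htors (hloc · ⟨x, hx⟩) hfin
  obtain ⟨U, hU, hxU, hinv, hUfin⟩ :=
    exists_isClopen_invariant_of_germStabilizer_finiteIndex (Γ := G) (⟨x, hx⟩ : K)
  have hval : ∀ (g : Equiv.Perm K) (hg : g ∈ G) (y : K),
      apK K g y = ((⟨g, hg⟩ : G) • y : K) := fun g hg y ↦ apK_coe g y
  have hmem : ∀ y ∈ ((↑) '' U : Set ℝ), ∃ hy : y ∈ K, (⟨y, hy⟩ : K) ∈ U := by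
    rintro _ ⟨y, hy, rfl⟩
    exact ⟨y.2, hy⟩
  refine ⟨(↑) '' U, Subtype.coe_image_subset K U, ⟨_, hxU, rfl⟩,
    (hU.1.isCompact.image continuous_subtype_val).isClosed, ?_, ?_, ?_⟩
  · obtain ⟨V, hV, hVU⟩ := isOpen_induced_iff.1 hU.2
    exact ⟨V, hV, by rw [← hVU, Subtype.image_preimage_coe, inter_comm]⟩
  · rintro g hg _ ⟨y, hy, rfl⟩
    rw [hval g hg]
    exact ⟨_, hinv _ y hy, rfl⟩
  · refine (hUfin.image fun φ (y : ((↑) '' U : Set ℝ)) ↦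
      ((φ ⟨⟨y, (hmem y y.2).1⟩, (hmem y y.2).2⟩ : K) : ℝ)).subset ?_
    rintro _ ⟨g, hg, rfl⟩
    refine ⟨_, ⟨⟨g, hg⟩, rfl⟩, ?_⟩
    funext y
    exact (hval g hg ⟨y, (hmem y y.2).1⟩).symm
end

section
/- Let K be a Cantor set in ℝ and let g ∈ diff^{1+Lip}(K). Then there exists an integer N ≥ 1 such that Per(g) = { p ∈ K : g^N(p) = p }, where Per(g) = { p ∈ K : g^n(p) = p for some integer n ≥ 1 } is the set of periodic points of g. -/
open Set

/-- `y` lies strictly between `x` and `z`, in either order. -/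
def StrictBtw {α : Type*} [LinearOrder α] (x y z : α) : Prop :=
  (x < y ∧ y < z) ∨ (z < y ∧ y < x)

/-- `x` and `z` are the two neighbours of `y` in the finite set `O`. -/
def IsNeighbourTriple {α : Type*} [LinearOrder α] (O : Finset α) (x y z : α) : Prop :=
  x ∈ O ∧ y ∈ O ∧ z ∈ O ∧ StrictBtw x y z ∧ ∀ w ∈ O, StrictBtw x w z → w = y

/-- `y` lies strictly between two points of `O` at distance less than `ε`. -/
def IsCrowded {K : Set ℝ} (ε : ℝ) (O : Finset K) (y : K) : Prop :=
  ∃ x ∈ O, ∃ z ∈ O, StrictBtw x y z ∧ dist x z < ε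

theorem StrictBtw.dist_left_lt {K : Set ℝ} {x y z : K} (h : StrictBtw x y z) :
    dist y x < dist x z := by
  simp only [Subtype.dist_eq, Real.dist_eq]
  rcases h with ⟨h1, h2⟩ | ⟨h1, h2⟩ <;> rw [← Subtype.coe_lt_coe] at h1 h2 <;>
    grind

theorem StrictBtw.dist_right_lt {K : Set ℝ} {x y z : K} (h : StrictBtw x y z) :
    dist y z < dist x z := by
  simp only [Subtype.dist_eq, Real.dist_eq]
  rcases h with ⟨h1, h2⟩ | ⟨h1, h2⟩ <;> rw [← Subtype.coe_lt_coe] at h1 h2 <;>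
    grind

theorem StrictBtw.trichotomy {α : Type*} [LinearOrder α] {x y z : α}
    (hxy : x ≠ y) (hxz : x ≠ z) (hyz : y ≠ z) :
    StrictBtw x y z ∨ StrictBtw y x z ∨ StrictBtw x z y := by
  unfold StrictBtw
  grind

/-- Pairwise disjoint subintervals of `[A, B]` have total length at most `B - A`. -/
theorem sum_length_le_of_pairwiseDisjoint {ι : Type*} (s : Finset ι) (l r : ι → ℝ) {A B : ℝ}
    (hAB : A ≤ B) (hlr : ∀ i ∈ s, l i ≤ r i) (hA : ∀ i ∈ s, A ≤ l i) (hB : ∀ i ∈ s, r i ≤ B)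
    (hd : (s : Set ι).PairwiseDisjoint fun i => Ioo (l i) (r i)) :
    ∑ i ∈ s, (r i - l i) ≤ B - A := by
  have h1 := MeasureTheory.measure_biUnion_finset (μ := MeasureTheory.volume) hd
    (fun _ _ => measurableSet_Ioo)
  have h2 : MeasureTheory.volume (⋃ i ∈ s, Ioo (l i) (r i)) ≤
      MeasureTheory.volume (Icc A B) := by
    refine MeasureTheory.measure_mono ?_
    simp only [iUnion_subset_iff]
    exact fun i hi x hx => ⟨(hA i hi).trans hx.1.le, hx.2.le.trans (hB i hi)⟩
  rw [h1] at h2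
  simp only [Real.volume_Ioo, Real.volume_Icc] at h2
  rwa [← ENNReal.ofReal_sum_of_nonneg (fun i hi => sub_nonneg.2 (hlr i hi)),
    ENNReal.ofReal_le_ofReal_iff (sub_nonneg.2 hAB)] at h2

/-- In a long cycle some point of a small set `B` stays away from `B` for a long time. -/
theorem exists_long_excursion {α : Type*} [DecidableEq α] (g : Equiv.Perm α) (O B : Finset α)
    (hB : B.Nonempty) (htrans : ∀ z ∈ B, ∀ x ∈ O, ∃ m : ℕ, (g ^ m) z = x) (T : ℕ)
    (hcard : B.card * (T + 1) < O.card) :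
    ∃ z ∈ B, ∀ j < T, (g ^ (j + 1)) z ∉ B := by
  by_contra! hcon
  obtain ⟨z₀, hz₀⟩ := hB
  have key : ∀ m : ℕ, ∀ z ∈ B, ∃ w ∈ B, ∃ i ≤ T, (g ^ m) z = (g ^ i) w := by
    intro m
    induction m using Nat.strong_induction_on with
    | _ m ih =>
      intro z hz
      by_cases hm : m ≤ T
      · exact ⟨z, hz, m, hm, rfl⟩
      · obtain ⟨j, hj, hjB⟩ := hcon z hz
        obtain ⟨w, hw, i, hi, h⟩ := ih (m - (j + 1)) (by omega) _ hjB
        refine ⟨w, hw, i, hi, ?_⟩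
        rw [← h, ← Equiv.Perm.mul_apply, ← pow_add]
        congr 2
        omega
  have hsub : O ⊆ (B ×ˢ Finset.range (T + 1)).image fun q => (g ^ q.2) q.1 := by
    intro x hx
    obtain ⟨m, rfl⟩ := htrans z₀ hz₀ x hx
    obtain ⟨w, hw, i, hi, h⟩ := key m z₀ hz₀
    simp only [Finset.mem_image, Finset.mem_product, Finset.mem_range]
    exact ⟨(w, i), ⟨hw, by omega⟩, h.symm⟩
  have := (Finset.card_le_card hsub).trans Finset.card_image_le
  rw [Finset.card_product, Finset.card_range] at this
  omega

theorem exists_isNeighbourTriple {K : Set ℝ} {ε : ℝ} {O : Finset K} {y : K} (hy : y ∈ O)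
    (h : IsCrowded ε O y) : ∃ x z, IsNeighbourTriple O x y z := by
  classical
  obtain ⟨x', hx', z', hz', hb, -⟩ := h
  have hl : (O.filter (· < y)).Nonempty := by
    rcases hb with hb | hb
    · exact ⟨x', by simp [hx', hb.1]⟩
    · exact ⟨z', by simp [hz', hb.1]⟩
  have hr : (O.filter (y < ·)).Nonempty := by
    rcases hb with hb | hb
    · exact ⟨z', by simp [hz', hb.2]⟩
    · exact ⟨x', by simp [hx', hb.2]⟩
  have h1 := Finset.mem_filter.1 (Finset.max'_mem _ hl)
  have h2 := Finset.mem_filter.1 (Finset.min'_mem _ hr)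
  refine ⟨_, _, h1.1, hy, h2.1, Or.inl ⟨h1.2, h2.2⟩, ?_⟩
  intro w hw hwb
  rcases hwb with hwb | hwb
  · rcases lt_trichotomy w y with hlt | heq | hgt
    · have := Finset.le_max' (O.filter (· < y)) w (by simp [hw, hlt])
      exact absurd hwb.1 this.not_gt
    · exact heq
    · have := Finset.min'_le (O.filter (y < ·)) w (by simp [hw, hgt])
      exact absurd hwb.2 this.not_gt
  · exact absurd (hwb.1.trans hwb.2) (h1.2.trans h2.2).not_gt

theorem IsNeighbourTriple.dist_lt {K : Set ℝ} {ε : ℝ} {O : Finset K} {x y z : K}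
    (h : IsNeighbourTriple O x y z) (hy : IsCrowded ε O y) : dist x z < ε := by
  obtain ⟨-, -, -, hb, hw⟩ := h
  obtain ⟨x', hx', z', hz', hb', hd⟩ := hy
  refine lt_of_le_of_lt ?_ hd
  have h1 := hw x' hx'
  have h2 := hw z' hz'
  simp only [Subtype.dist_eq, Real.dist_eq]
  unfold StrictBtw at *
  simp only [← Subtype.coe_lt_coe, Subtype.ext_iff] at *
  grind

theorem card_not_isCrowded_le {K : Set ℝ} {ε A B : ℝ} (hε : 0 < ε) (hAB : K ⊆ Icc A B)
    (O S : Finset K) (hSO : S ⊆ O) (hS : ∀ y ∈ S, ¬ IsCrowded ε O y) :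
    S.card ≤ 2 * (Finset.Icc (0 : ℤ) ⌊(B - A) / ε⌋).card := by
  classical
  have h1 := Finset.card_le_mul_card_image (f := fun y : K => ⌊((y : ℝ) - A) / ε⌋) S 2 ?_
  · refine h1.trans (Nat.mul_le_mul_left _ (Finset.card_le_card ?_))
    intro m hm
    obtain ⟨y, -, rfl⟩ := Finset.mem_image.1 hm
    have hy := hAB y.2
    rw [Finset.mem_Icc]
    refine ⟨Int.floor_nonneg.2 (div_nonneg (sub_nonneg.2 hy.1) hε.le), Int.floor_mono ?_⟩
    have := hy.2
    gcongr
  · intro m _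
    by_contra! hcard
    obtain ⟨a, ha, b, hb, c, hc, hab, hac, hbc⟩ := Finset.two_lt_card.1 hcard
    have hclose : ∀ u v : K, ⌊((u : ℝ) - A) / ε⌋ = m → ⌊((v : ℝ) - A) / ε⌋ = m →
        dist u v < ε := by
      intro u v hu hv
      have := Int.abs_sub_lt_one_of_floor_eq_floor (hu.trans hv.symm)
      rwa [← sub_div, sub_sub_sub_cancel_right, abs_div, abs_of_pos hε, div_lt_one hε] at this
    simp only [Finset.mem_filter] at ha hb hc
    rcases StrictBtw.trichotomy hab hac hbc with h | h | h
    · exact hS b hb.1 ⟨a, hSO ha.1, c, hSO hc.1, h, hclose _ _ ha.2 hc.2⟩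
    · exact hS a ha.1 ⟨b, hSO hb.1, c, hSO hc.1, h, hclose _ _ hb.2 hc.2⟩
    · exact hS c hc.1 ⟨a, hSO ha.1, b, hSO hb.1, h, hclose _ _ ha.2 hb.2⟩

theorem IsNeighbourTriple.map {K : Set ℝ} {g : Equiv.Perm K} {ε₀ ε₁ ε₂ : ℝ} (h₂₀ : ε₂ ≤ ε₀)
    (hM : ∀ x y z : K, StrictBtw x y z → dist x z < ε₀ → StrictBtw (g x) (g y) (g z))
    (hQ : ∀ x y z : K, StrictBtw x y z → dist x z < ε₁ →
      StrictBtw (g.symm x) (g.symm y) (g.symm z))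
    (hg : ∀ x z : K, dist x z < ε₂ → dist (g x) (g z) < ε₁)
    {O : Finset K} (hO : ∀ x, g x ∈ O ↔ x ∈ O) {x y z : K}
    (h : IsNeighbourTriple O x y z) (hd : dist x z < ε₂) :
    IsNeighbourTriple O (g x) (g y) (g z) := by
  obtain ⟨hx, hy, hz, hb, hw⟩ := h
  refine ⟨(hO x).2 hx, (hO y).2 hy, (hO z).2 hz, hM _ _ _ hb (hd.trans_le h₂₀), ?_⟩
  intro w hwO hwb
  have h1 := hQ _ _ _ hwb (hg _ _ hd)
  simp only [Equiv.symm_apply_apply] at h1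
  have h2 := hw (g.symm w) ((hO _).1 (by simpa using hwO)) h1
  rw [← h2, Equiv.apply_symm_apply]

/-- Neighbour triples with distinct middle points have essentially disjoint spans on each side. -/
theorem IsNeighbourTriple.disjoint_sides {K : Set ℝ} {O : Finset K} {x y z x' y' z' : K}
    (h : IsNeighbourTriple O x y z) (h' : IsNeighbourTriple O x' y' z') (hne : y ≠ y') :
    Disjoint (Ioo (min (x : ℝ) z) y) (Ioo (min (x' : ℝ) z') y') ∧
      Disjoint (Ioo (y : ℝ) (max x z)) (Ioo (y' : ℝ) (max x' z')) := by
  obtain ⟨-, hy, -, hb, hw⟩ := h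
  obtain ⟨-, hy', -, hb', hw'⟩ := h'
  have h1 := hw y' hy'
  have h2 := hw' y hy
  simp only [Set.disjoint_left, mem_Ioo]
  unfold StrictBtw at *
  simp only [← Subtype.coe_lt_coe, Subtype.ext_iff, ne_eq] at *
  constructor <;> intro t <;> grind

theorem IsNeighbourTriple.sum_dist_le {K : Set ℝ} {O : Finset K} {ι : Type*} (s : Finset ι)
    (x y z : ι → K) {A B : ℝ} (hAB : A ≤ B) (hK : K ⊆ Icc A B)
    (h : ∀ i ∈ s, IsNeighbourTriple O (x i) (y i) (z i)) (hinj : Set.InjOn y s) :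
    ∑ i ∈ s, dist (x i) (z i) ≤ 2 * (B - A) := by
  have hdis : ∀ i ∈ s, ∀ j ∈ s, i ≠ j → _ := fun i hi j hj hij =>
    (h i hi).disjoint_sides (h j hj) (fun e => hij (hinj hi hj e))
  have hord : ∀ i ∈ s, min (x i : ℝ) (z i) ≤ y i ∧ (y i : ℝ) ≤ max (x i : ℝ) (z i) := by
    intro i hi
    have := (h i hi).2.2.2.1
    unfold StrictBtw at this
    simp only [← Subtype.coe_lt_coe] at this
    grind
  have h1 := sum_length_le_of_pairwiseDisjoint s (fun i => min (x i : ℝ) (z i))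
    (fun i => (y i : ℝ)) hAB (fun i hi => (hord i hi).1)
    (fun i _ => le_min (hK (x i).2).1 (hK (z i).2).1) (fun i _ => (hK (y i).2).2)
    (fun i hi j hj hij => (hdis i hi j hj hij).1)
  have h2 := sum_length_le_of_pairwiseDisjoint s (fun i => (y i : ℝ))
    (fun i => max (x i : ℝ) (z i)) hAB (fun i hi => (hord i hi).2)
    (fun i _ => (hK (y i).2).1) (fun i _ => max_le (hK (x i).2).2 (hK (z i).2).2)
    (fun i hi j hj hij => (hdis i hi j hj hij).2)
  calc ∑ i ∈ s, dist (x i) (z i)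
      = ∑ i ∈ s, ((y i : ℝ) - min (x i : ℝ) (z i)) +
          ∑ i ∈ s, (max (x i : ℝ) (z i) - (y i : ℝ)) := by
        rw [← Finset.sum_add_distrib]
        refine Finset.sum_congr rfl fun i _ => ?_
        rw [Subtype.dist_eq, Real.dist_eq, ← max_sub_min_eq_abs]
        rw [max_comm, min_comm]
        ring
    _ ≤ 2 * (B - A) := by linarith

/-- A long cycle contains two points, not too close, whose iterates remain close for a long time,
with a uniform bound on the sum of the distances. -/
theorem exists_wandering_pair {K : Set ℝ} {g : Equiv.Perm K} {ε₀ ε₁ ε₂ ε₃ A B : ℝ}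
    (hε₂ : 0 < ε₂) (h₂₀ : ε₂ ≤ ε₀) (h₃₁ : ε₃ ≤ ε₁)
    (hM : ∀ x y z : K, StrictBtw x y z → dist x z < ε₀ → StrictBtw (g x) (g y) (g z))
    (hQ : ∀ x y z : K, StrictBtw x y z → dist x z < ε₁ →
      StrictBtw (g.symm x) (g.symm y) (g.symm z))
    (hg : ∀ x z : K, dist x z < ε₂ → dist (g x) (g z) < ε₁)
    (hgs : ∀ x z : K, dist x z < ε₃ → dist (g.symm x) (g.symm z) < ε₂)
    (hAB : A ≤ B) (hK : K ⊆ Icc A B) (O : Finset K) (hO : ∀ x, g x ∈ O ↔ x ∈ O)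
    (htrans : ∀ z ∈ O, ∀ x ∈ O, ∃ m : ℕ, (g ^ m) z = x) (T : ℕ) (hT : 0 < T)
    (hcard : 2 * (Finset.Icc (0 : ℤ) ⌊(B - A) / ε₂⌋).card * (T + 1) < O.card) :
    ∃ a ∈ O, ∃ b ∈ O, ε₃ ≤ dist a b ∧ (∀ j < T, dist ((g ^ j) a) ((g ^ j) b) < ε₂) ∧
      ∑ j ∈ Finset.range T, dist ((g ^ j) a) ((g ^ j) b) ≤ 2 * (B - A) := by
  classical
  set S := O.filter fun y => ¬ IsCrowded ε₂ O y with hS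
  have hSO : S ⊆ O := Finset.filter_subset _ _
  have hOne : O.Nonempty := Finset.card_pos.1 (by omega)
  have hSne : S.Nonempty := by
    refine ⟨O.min' hOne, Finset.mem_filter.2 ⟨Finset.min'_mem _ _, ?_⟩⟩
    rintro ⟨x, hx, z, hz, hb, -⟩
    rcases hb with hb | hb
    · exact absurd hb.1 (Finset.min'_le _ _ hx).not_gt
    · exact absurd hb.1 (Finset.min'_le _ _ hz).not_gt
  have hScard : S.card * (T + 1) < O.card :=
    lt_of_le_of_lt (Nat.mul_le_mul_right _ (card_not_isCrowded_le hε₂ hK O S hSO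
      fun y hy => (Finset.mem_filter.1 hy).2)) hcard
  obtain ⟨y₀, hy₀, hfree⟩ := exists_long_excursion g O S hSne
    (fun z hz => htrans z (hSO hz)) T hScard
  have hpowO : ∀ j : ℕ, (g ^ j) y₀ ∈ O := by
    intro j
    induction j with
    | zero => simpa using hSO hy₀
    | succ j ih => rw [pow_succ', Equiv.Perm.mul_apply, hO]; exact ih
  have hcrowd : ∀ j < T, IsCrowded ε₂ O ((g ^ (j + 1)) y₀) := by
    intro j hj
    by_contra hcon
    exact hfree j hj (Finset.mem_filter.2 ⟨hpowO _, hcon⟩)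
  obtain ⟨a, b, hab⟩ := exists_isNeighbourTriple (hpowO 1) (hcrowd 0 hT)
  have htri : ∀ j < T,
      IsNeighbourTriple O ((g ^ j) a) ((g ^ (j + 1)) y₀) ((g ^ j) b) := by
    intro j
    induction j with
    | zero => intro _; simpa using hab
    | succ j ih =>
      intro hj
      have hj' : j < T := by omega
      have h := (ih hj').map h₂₀ hM hQ hg hO ((ih hj').dist_lt (hcrowd j hj'))
      simpa only [pow_succ' g, Equiv.Perm.mul_apply] using h
  refine ⟨a, hab.1, b, hab.2.2.1, ?_, fun j hj => (htri j hj).dist_lt (hcrowd j hj), ?_⟩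
  · by_contra! hlt
    have h1 := hQ _ _ _ hab.2.2.2.1 (hlt.trans_le h₃₁)
    simp only [pow_one, Equiv.symm_apply_apply] at h1
    exact (Finset.mem_filter.1 hy₀).2 ⟨_, (hO _).1 (by simpa using hab.1), _,
      (hO _).1 (by simpa using hab.2.2.1), h1, hgs _ _ hlt⟩
  · refine IsNeighbourTriple.sum_dist_le (O := O) (Finset.range T) (fun j => (g ^ j) a)
      (fun j => (g ^ (j + 1)) y₀) (fun j => (g ^ j) b) hAB hK
      (fun j hj => htri j (Finset.mem_range.1 hj)) ?_
    have hlt : ∀ j k : ℕ, j < k → k < T → (g ^ (j + 1)) y₀ ≠ (g ^ (k + 1)) y₀ := by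
      intro j k hjk hk e
      refine hfree (k - j - 1) (by omega) ?_
      have e2 : (g ^ (k + 1)) y₀ = (g ^ (j + 1)) ((g ^ (k - j - 1 + 1)) y₀) := by
        rw [← Equiv.Perm.mul_apply, ← pow_add]
        congr 2
        omega
      rw [e2] at e
      rw [← (g ^ (j + 1)).injective e]
      exact hy₀
    intro j hj k hk e
    simp only [Finset.coe_range, mem_Iio] at hj hk
    rcases lt_trichotomy j k with h | h | h
    · exact absurd e (hlt j k h hk)
    · exact h
    · exact absurd e.symm (hlt k j h hj)

/-- Bounded distortion: points near `a` stay near the orbit of `a`, relative to a companion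
orbit `b` with summable distances. -/
theorem dist_iterate_le_of_sum_dist_le {K : Set ℝ} {g : Equiv.Perm K} {ε C D δ : ℝ}
    (hC : 0 ≤ C)
    (hP : ∀ a b u : K, dist a b < ε → dist a u < ε →
      dist (g a) (g u) * dist a b ≤
        Real.exp (C * (dist a b + dist a u)) * dist (g a) (g b) * dist a u)
    {a b u : K} {T : ℕ} (hδ : 0 < δ) (hab : δ ≤ dist a b)
    (hsmall : ∀ j < T, dist ((g ^ j) a) ((g ^ j) b) < ε)
    (hsum : ∑ j ∈ Finset.range T, dist ((g ^ j) a) ((g ^ j) b) ≤ D)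
    (hu : dist a u ≤ δ * Real.exp (-(2 * C * D))) :
    ∀ j < T, dist ((g ^ j) a) ((g ^ j) u) ≤ dist ((g ^ j) a) ((g ^ j) b) := by
  have hpos : ∀ j : ℕ, 0 < dist ((g ^ j) a) ((g ^ j) b) := fun j =>
    dist_pos.2 fun e => (hδ.trans_le hab).ne' (by rw [(g ^ j).injective e, dist_self])
  have of_key : ∀ j < T, dist ((g ^ j) a) ((g ^ j) u) * δ ≤
      Real.exp (2 * C * ∑ i ∈ Finset.range j, dist ((g ^ i) a) ((g ^ i) b)) *
        dist ((g ^ j) a) ((g ^ j) b) * dist a u →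
      dist ((g ^ j) a) ((g ^ j) u) ≤ dist ((g ^ j) a) ((g ^ j) b) := by
    intro j hj h
    have hs : ∑ i ∈ Finset.range j, dist ((g ^ i) a) ((g ^ i) b) ≤ D :=
      (Finset.sum_le_sum_of_subset_of_nonneg
        (Finset.range_subset_range.2 hj.le) fun _ _ _ => dist_nonneg).trans hsum
    refine le_of_mul_le_mul_right ?_ hδ
    calc _ ≤ _ := h
      _ ≤ Real.exp (2 * C * D) * dist ((g ^ j) a) ((g ^ j) b) *
          (δ * Real.exp (-(2 * C * D))) := by
        gcongr
      _ = (Real.exp (2 * C * D) * Real.exp (-(2 * C * D))) *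
          (dist ((g ^ j) a) ((g ^ j) b) * δ) := by ring
      _ = _ := by rw [← Real.exp_add, add_neg_cancel, Real.exp_zero, one_mul]
  have key : ∀ j < T, dist ((g ^ j) a) ((g ^ j) u) * δ ≤
      Real.exp (2 * C * ∑ i ∈ Finset.range j, dist ((g ^ i) a) ((g ^ i) b)) *
        dist ((g ^ j) a) ((g ^ j) b) * dist a u := by
    intro j
    induction j with
    | zero =>
      intro _
      simp only [pow_zero, Equiv.Perm.one_apply, Finset.range_zero, Finset.sum_empty, mul_zero,
        Real.exp_zero, one_mul]
      rw [mul_comm]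
      gcongr
    | succ j ih =>
      intro hj
      have hj' : j < T := by omega
      have h1 := ih hj'
      have h2 := of_key j hj' h1
      have h3 := hP _ _ _ (hsmall j hj') (h2.trans_lt (hsmall j hj'))
      have h4 := hpos j
      simp only [← Equiv.Perm.mul_apply, ← pow_succ'] at h3
      rw [Finset.sum_range_succ, mul_add, Real.exp_add]
      refine le_of_mul_le_mul_right ?_ h4
      set l := dist ((g ^ j) a) ((g ^ j) b)
      set r := dist ((g ^ j) a) ((g ^ j) u)
      have h5 : Real.exp (C * (l + r)) ≤ Real.exp (2 * C * l) := by
        apply Real.exp_le_exp.2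
        nlinarith
      calc _ = dist ((g ^ (j + 1)) a) ((g ^ (j + 1)) u) * l * δ := by ring
        _ ≤ Real.exp (C * (l + r)) * dist ((g ^ (j + 1)) a) ((g ^ (j + 1)) b) * r * δ := by
          gcongr
        _ ≤ Real.exp (2 * C * l) * dist ((g ^ (j + 1)) a) ((g ^ (j + 1)) b) * r * δ := by
          gcongr
        _ = Real.exp (2 * C * l) * dist ((g ^ (j + 1)) a) ((g ^ (j + 1)) b) * (r * δ) := by ring
        _ ≤ Real.exp (2 * C * l) * dist ((g ^ (j + 1)) a) ((g ^ (j + 1)) b) *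
            (Real.exp (2 * C * ∑ i ∈ Finset.range j, dist ((g ^ i) a) ((g ^ i) b)) * l *
              dist a u) := by
          gcongr
        _ = _ := by ring
  exact fun j hj => of_key j hj (key j hj)

/-- Local properties of a `C¹` embedding with Lipschitz log-derivative: betweenness is preserved
and difference quotients at a common base point are comparable. -/
theorem exists_local_control {K : Set ℝ} {g : Equiv.Perm K} (hg : IsD1Lip K g) (p : K) :
    ∃ r > 0, ∃ C ≥ 0,
      (∀ x y z : K, dist p x < r → dist p y < r → dist p z < r → StrictBtw x y z →
        StrictBtw (g x) (g y) (g z)) ∧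
      ∀ a b u : K, dist p a < r → dist p b < r → dist p u < r →
        dist (g a) (g u) * dist a b ≤
          Real.exp (C * (dist a b + dist a u)) * dist (g a) (g b) * dist a u := by
  obtain ⟨α, β, hp, F, F', hder, -, hinj, ⟨C, hLip⟩, hFg⟩ := hg p
  have hF : ∀ x : K, (x : ℝ) ∈ Ioo α β → F x = g x := by
    intro x hx
    rw [hFg x hx x.2, apK, dif_pos x.2]
  obtain ⟨r, hr, hball⟩ := Metric.isOpen_iff.1 isOpen_Ioo _ hp
  have hmem : ∀ x : K, dist p x < r → (x : ℝ) ∈ Ioo α β := fun x hx =>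
    hball (by rw [Metric.mem_ball, dist_comm]; exact hx)
  have hcont : ContinuousOn F (Ioo α β) := fun y hy => (hder y hy).1.continuousAt.continuousWithinAt
  refine ⟨r, hr, C, C.2, ?_, ?_⟩
  · intro x y z hx hy hz hb
    have hx := hmem x hx
    have hy := hmem y hy
    have hz := hmem z hz
    unfold StrictBtw at *
    simp only [← Subtype.coe_lt_coe, ← hF _ hx, ← hF _ hy, ← hF _ hz] at *
    rcases hcont.strictMonoOn_of_injOn_Ioo (hp.1.trans hp.2) hinj with h | h
    · rwa [h.lt_iff_lt hx hy, h.lt_iff_lt hy hz, h.lt_iff_lt hz hy, h.lt_iff_lt hy hx]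
    · rw [h.lt_iff_gt hx hy, h.lt_iff_gt hy hz, h.lt_iff_gt hz hy, h.lt_iff_gt hy hx]
      tauto
  · intro a b u ha hb hu
    have mvt : ∀ x y : ℝ, x ∈ Ioo α β → y ∈ Ioo α β → x < y →
        ∃ ξ ∈ Ioo α β, |x - ξ| ≤ |x - y| ∧ |y - ξ| ≤ |x - y| ∧
          |F x - F y| = |F' ξ| * |x - y| := by
      intro x y hx hy hxy
      have hsub : Icc x y ⊆ Ioo α β := fun t ht => ⟨hx.1.trans_le ht.1, ht.2.trans_lt hy.2⟩
      obtain ⟨ξ, hξ, e⟩ := exists_hasDerivAt_eq_slope F F' hxy (hcont.mono hsub)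
        fun t ht => (hder t (hsub ⟨ht.1.le, ht.2.le⟩)).1
      refine ⟨ξ, hsub ⟨hξ.1.le, hξ.2.le⟩, ?_, ?_, ?_⟩
      · grind
      · grind
      · have : y - x ≠ 0 := by linarith
        rw [abs_sub_comm x y, ← abs_mul, e, div_mul_cancel₀ _ this, abs_sub_comm]
    have mvt' : ∀ x y : K, dist p x < r → dist p y < r → x ≠ y →
        ∃ ξ ∈ Ioo α β, |(x : ℝ) - ξ| ≤ dist x y ∧ dist (g x) (g y) = |F' ξ| * dist x y := by
      intro x y hx hy hxy
      have hx := hmem x hx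
      have hy := hmem y hy
      simp only [Subtype.dist_eq, Real.dist_eq, ← hF _ hx, ← hF _ hy]
      rcases lt_or_gt_of_ne (fun e => hxy (Subtype.ext e) : (x : ℝ) ≠ y) with h | h
      · obtain ⟨ξ, h1, h2, -, h4⟩ := mvt x y hx hy h
        exact ⟨ξ, h1, h2, h4⟩
      · obtain ⟨ξ, h1, -, h3, h4⟩ := mvt y x hy hx h
        exact ⟨ξ, h1, by rwa [abs_sub_comm (x : ℝ) y],
          by rwa [abs_sub_comm (x : ℝ) y, abs_sub_comm (F x)]⟩
    rcases eq_or_ne a b with rfl | hab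
    · simp
    rcases eq_or_ne a u with rfl | hau
    · simp
    obtain ⟨ξ, hξ, hξd, hξe⟩ := mvt' a b ha hb hab
    obtain ⟨η, hη, hηd, hηe⟩ := mvt' a u ha hu hau
    rw [hξe, hηe]
    have hlog : Real.log |F' η| - Real.log |F' ξ| ≤ C * (dist a b + dist a u) := by
      have h1 := hLip.dist_le_mul η hη ξ hξ
      rw [Real.dist_eq, Real.dist_eq] at h1
      refine (le_abs_self _).trans (h1.trans ?_)
      gcongr
      have := abs_sub_le η a ξ
      rw [abs_sub_comm η a] at this
      linarith
    have hξ0 : 0 < |F' ξ| := abs_pos.2 (hder ξ hξ).2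
    have hη0 : 0 < |F' η| := abs_pos.2 (hder η hη).2
    have hratio : |F' η| ≤ Real.exp (C * (dist a b + dist a u)) * |F' ξ| := by
      calc |F' η| = Real.exp (Real.log |F' η|) := (Real.exp_log hη0).symm
        _ ≤ Real.exp (C * (dist a b + dist a u) + Real.log |F' ξ|) :=
          Real.exp_le_exp.2 (by linarith)
        _ = _ := by rw [Real.exp_add, Real.exp_log hξ0]
    calc _ = |F' η| * (dist a u * dist a b) := by ring
      _ ≤ Real.exp (C * (dist a b + dist a u)) * |F' ξ| * (dist a u * dist a b) := by gcongr
      _ = _ := by ring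

/-- The local control of `exists_local_control` holds at a uniform scale. -/
theorem exists_uniform_control {K : Set ℝ} (hK : IsCompact K) {g : Equiv.Perm K}
    (hg : IsD1Lip K g) :
    ∃ ε > 0, ∃ C ≥ 0,
      (∀ x y z : K, StrictBtw x y z → dist x z < ε → StrictBtw (g x) (g y) (g z)) ∧
      ∀ a b u : K, dist a b < ε → dist a u < ε →
        dist (g a) (g u) * dist a b ≤
          Real.exp (C * (dist a b + dist a u)) * dist (g a) (g b) * dist a u := by
  have : CompactSpace K := isCompact_iff_compactSpace.1 hK
  have main := (isCompact_univ (X := K)).induction_on (p := fun s => ∃ ε > 0, ∃ C ≥ 0,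
      (∀ x y z : K, x ∈ s → StrictBtw x y z → dist x z < ε → StrictBtw (g x) (g y) (g z)) ∧
      ∀ a b u : K, a ∈ s → dist a b < ε → dist a u < ε →
        dist (g a) (g u) * dist a b ≤
          Real.exp (C * (dist a b + dist a u)) * dist (g a) (g b) * dist a u)
    ⟨1, one_pos, 0, le_rfl, by simp, by simp⟩ ?_ ?_ ?_
  · simpa using main
  · rintro s t hst ⟨ε, hε, C, hC, h1, h2⟩
    exact ⟨ε, hε, C, hC, fun x y z hx => h1 x y z (hst hx), fun a b u ha => h2 a b u (hst ha)⟩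
  · rintro s t ⟨ε, hε, C, hC, h1, h2⟩ ⟨ε', hε', C', hC', h1', h2'⟩
    refine ⟨min ε ε', lt_min hε hε', max C C', hC.trans (le_max_left _ _), ?_, ?_⟩
    · rintro x y z (hx | hx) hb hd
      · exact h1 x y z hx hb (hd.trans_le (min_le_left _ _))
      · exact h1' x y z hx hb (hd.trans_le (min_le_right _ _))
    · rintro a b u (ha | ha) hab hau
      · refine (h2 a b u ha (hab.trans_le (min_le_left _ _))
          (hau.trans_le (min_le_left _ _))).trans ?_
        gcongr
        exact le_max_left _ _
      · refine (h2' a b u ha (hab.trans_le (min_le_right _ _))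
          (hau.trans_le (min_le_right _ _))).trans ?_
        gcongr
        exact le_max_right _ _
  · intro p _
    obtain ⟨r, hr, C, hC, h1, h2⟩ := exists_local_control hg p
    refine ⟨Metric.ball p (r / 2), mem_nhdsWithin_of_mem_nhds
      (Metric.ball_mem_nhds _ (by positivity)), r / 2, by positivity, C, hC, ?_, ?_⟩
    · intro x y z hx hb hd
      rw [Metric.mem_ball, dist_comm] at hx
      have hy := hb.dist_left_lt
      rw [dist_comm] at hy
      exact h1 x y z (by linarith) (by linarith [dist_triangle p x y])
        (by linarith [dist_triangle p x z]) hb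
    · intro a b u ha hab hau
      rw [Metric.mem_ball, dist_comm] at ha
      exact h2 a b u (by linarith) (by linarith [dist_triangle p a b])
        (by linarith [dist_triangle p a u])

/-- A permutation preserving betweenness at scale `ε` has an inverse preserving betweenness at
any scale at which the inverse has oscillation less than `ε`. -/
theorem strictBtw_symm_of_dist_lt {K : Set ℝ} {g : Equiv.Perm K} {ε ε' : ℝ}
    (hM : ∀ x y z : K, StrictBtw x y z → dist x z < ε → StrictBtw (g x) (g y) (g z))
    (hgs : ∀ x z : K, dist x z < ε' → dist (g.symm x) (g.symm z) < ε) (x y z : K)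
    (hb : StrictBtw x y z) (hd : dist x z < ε') :
    StrictBtw (g.symm x) (g.symm y) (g.symm z) := by
  have h1 := hgs _ _ hd
  have h2 := hgs _ _ (hb.dist_left_lt.trans hd)
  have h3 := hgs _ _ (hb.dist_right_lt.trans hd)
  have hne : x ≠ y ∧ x ≠ z ∧ y ≠ z := by
    unfold StrictBtw at hb
    grind
  rcases StrictBtw.trichotomy (g.symm.injective.ne hne.1) (g.symm.injective.ne hne.2.1)
    (g.symm.injective.ne hne.2.2) with h | h | h
  · exact h
  · have := hM _ _ _ h h3
    simp only [Equiv.apply_symm_apply] at this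
    unfold StrictBtw at *
    grind
  · rw [dist_comm] at h2
    have := hM _ _ _ h h2
    simp only [Equiv.apply_symm_apply] at this
    unfold StrictBtw at *
    grind

/-- The forward orbit of a periodic point, as a finite set. -/
theorem exists_finset_orbit {α : Type*} (g : Equiv.Perm α) (p : α)
    (hn : 0 < Function.minimalPeriod g p) :
    ∃ O : Finset α, O.card = Function.minimalPeriod g p ∧ (∀ x, g x ∈ O ↔ x ∈ O) ∧
      (∀ z ∈ O, ∀ x ∈ O, ∃ m : ℕ, (g ^ m) z = x) ∧
      ∀ x ∈ O, (g ^ Function.minimalPeriod g p) x = x := by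
  classical
  set n := Function.minimalPeriod g p with hndef
  have hper : (g ^ n) p = p := by
    rw [← Equiv.Perm.iterate_eq_pow]
    exact Function.iterate_minimalPeriod
  have hmul : ∀ i k : ℕ, (g ^ (k + i * n)) p = (g ^ k) p := by
    intro i k
    induction i with
    | zero => simp
    | succ i ih =>
      rw [Nat.succ_mul, ← add_assoc, pow_add, Equiv.Perm.mul_apply, hper, ih]
  have hmem : ∀ x, x ∈ (Finset.range n).image (fun i => (g ^ i) p) ↔ ∃ m : ℕ, (g ^ m) p = x := by
    intro x
    simp only [Finset.mem_image, Finset.mem_range]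
    constructor
    · rintro ⟨i, -, h⟩
      exact ⟨i, h⟩
    · rintro ⟨m, rfl⟩
      refine ⟨m % n, Nat.mod_lt _ hn, ?_⟩
      rw [← hmul (m / n) (m % n), mul_comm, Nat.mod_add_div]
  refine ⟨(Finset.range n).image (fun i => (g ^ i) p), ?_, ?_, ?_, ?_⟩
  · rw [Finset.card_image_of_injOn, Finset.card_range]
    have := Function.iterate_injOn_Iio_minimalPeriod (f := g) (x := p)
    simpa only [Finset.coe_range, Equiv.Perm.iterate_eq_pow] using this
  · intro x
    rw [hmem, hmem]
    constructor
    · rintro ⟨m, hm⟩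
      refine ⟨m + (n - 1), g.injective ?_⟩
      rw [← hm, ← Equiv.Perm.mul_apply, ← pow_succ', ← hmul 1 m]
      congr 2
      omega
    · rintro ⟨m, rfl⟩
      exact ⟨m + 1, by rw [pow_succ', Equiv.Perm.mul_apply]⟩
  · intro z hz x hx
    obtain ⟨i, rfl⟩ := (hmem z).1 hz
    obtain ⟨k, rfl⟩ := (hmem x).1 hx
    refine ⟨k + i * (n - 1), ?_⟩
    rw [← Equiv.Perm.mul_apply, ← pow_add, ← hmul i k]
    congr 2
    obtain ⟨n', hn'⟩ : ∃ n', n = n' + 1 := ⟨n - 1, by omega⟩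
    rw [hn', Nat.add_sub_cancel]
    ring
  · intro x hx
    obtain ⟨i, rfl⟩ := (hmem x).1 hx
    rw [← Equiv.Perm.mul_apply, ← pow_add, add_comm, pow_add, Equiv.Perm.mul_apply, hper]

/-- Two distinct periodic points cannot have iterates with bounded sums of distances. -/
theorem eq_of_sum_dist_le {X : Type*} [MetricSpace X] {g : Equiv.Perm X} {a b : X} {n : ℕ}
    (hn : 0 < n) (ha : (g ^ n) a = a) (hb : (g ^ n) b = b) {D : ℝ}
    (h : ∀ T : ℕ, ∑ j ∈ Finset.range T, dist ((g ^ j) a) ((g ^ j) b) ≤ D) : a = b := by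
  have h1 := (summable_of_sum_range_le (fun _ => dist_nonneg) h).tendsto_atTop_zero
  have h2 : Filter.Tendsto (fun m : ℕ => n * m) Filter.atTop Filter.atTop :=
    Filter.tendsto_id.const_mul_atTop' hn
  have hpow : ∀ x : X, (g ^ n) x = x → ∀ m : ℕ, (g ^ (n * m)) x = x := by
    intro x hx m
    rw [pow_mul]
    exact Function.IsFixedPt.perm_pow hx m
  have h3 := h1.comp h2
  simp only [Function.comp_def, hpow a ha, hpow b hb] at h3
  exact dist_eq_zero.1 (tendsto_nhds_unique tendsto_const_nhds h3)

theorem exists_minimalPeriod_le {K : Set ℝ} (hK : IsCompact K) {g : Equiv.Perm K}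
    (hg : MemDiffLip K g) : ∃ R : ℕ, ∀ p : K, Function.minimalPeriod g p ≤ R := by
  by_contra! hcon
  have : CompactSpace K := isCompact_iff_compactSpace.1 hK
  obtain ⟨hgc, hgsc, hgd⟩ := hg
  obtain ⟨ε₀, hε₀, C, hC, hM, hP⟩ := exists_uniform_control hK hgd
  have hgu := Metric.uniformContinuous_iff.1 (CompactSpace.uniformContinuous_of_continuous hgc)
  have hgsu := Metric.uniformContinuous_iff.1 (CompactSpace.uniformContinuous_of_continuous hgsc)
  obtain ⟨ε₁, hε₁, hgs₁⟩ := hgsu ε₀ hε₀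
  obtain ⟨ε₂', hε₂', hg₂⟩ := hgu ε₁ hε₁
  set ε₂ := min ε₀ ε₂'
  have hε₂ : 0 < ε₂ := lt_min hε₀ hε₂'
  obtain ⟨ε₃', hε₃', hgs₃⟩ := hgsu ε₂ hε₂
  set ε₃ := min ε₁ ε₃'
  have hε₃ : 0 < ε₃ := lt_min hε₁ hε₃'
  obtain ⟨A, B, hAB, hKAB⟩ : ∃ A B : ℝ, A ≤ B ∧ K ⊆ Icc A B := by
    obtain ⟨r, hr⟩ := hK.isBounded.subset_closedBall 0
    refine ⟨-|r|, |r|, by linarith [abs_nonneg r], fun x hx => abs_le.1 ?_⟩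
    have := hr hx
    rw [mem_closedBall_zero_iff, Real.norm_eq_abs] at this
    exact this.trans (le_abs_self r)
  set D := 2 * (B - A)
  have hpairs : ∀ T : ℕ, ∃ a b : K, ∃ n > 0, (g ^ n) a = a ∧ (g ^ n) b = b ∧ ε₃ ≤ dist a b ∧
      (∀ j < T + 1, dist ((g ^ j) a) ((g ^ j) b) < ε₂) ∧
      ∑ j ∈ Finset.range (T + 1), dist ((g ^ j) a) ((g ^ j) b) ≤ D := by
    intro T
    obtain ⟨p, hp⟩ := hcon (2 * (Finset.Icc (0 : ℤ) ⌊(B - A) / ε₂⌋).card * (T + 1 + 1))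
    obtain ⟨O, hcard, hO, htrans, hfix⟩ := exists_finset_orbit g p (by omega)
    obtain ⟨a, ha, b, hb, h1, h2, h3⟩ := exists_wandering_pair hε₂ (min_le_left _ _)
      (min_le_left _ _) hM (strictBtw_symm_of_dist_lt hM fun x z h => hgs₁ h)
      (fun x z h => hg₂ (h.trans_le (min_le_right _ _)))
      (fun x z h => hgs₃ (h.trans_le (min_le_right _ _))) hAB hKAB O hO htrans (T + 1)
      (Nat.succ_pos _) (by rwa [hcard])
    exact ⟨a, b, _, by omega, hfix a ha, hfix b hb, h1, h2, h3⟩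
  choose a b n hn ha hb hfar hnear hsum using hpairs
  obtain ⟨⟨a₀, b₀⟩, φ, hφ, hlim⟩ := CompactSpace.tendsto_subseq fun T => (a T, b T)
  rw [Prod.tendsto_iff] at hlim
  set δ := ε₃ * Real.exp (-(2 * C * D))
  have hδ : 0 < δ := by positivity
  have hev := ((Metric.tendsto_nhds.1 hlim.1 (δ / 2) (by positivity)).and
    (Metric.tendsto_nhds.1 hlim.2 (δ / 2) (by positivity)))
  obtain ⟨N, hN⟩ := Filter.eventually_atTop.1 hev
  simp only [Function.comp_def] at hN
  refine (hε₃.trans_le (hfar (φ N))).ne' (dist_eq_zero.2 ?_)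
  refine eq_of_sum_dist_le (D := 3 * D) (hn (φ N)) (ha _) (hb _) fun T => ?_
  set k := φ (max N T)
  have hTk : T ≤ k := (le_max_right N T).trans (hφ.id_le _)
  obtain ⟨h1, h2⟩ := hN N le_rfl
  obtain ⟨h3, h4⟩ := hN (max N T) (le_max_left _ _)
  have hda : dist (a k) (a (φ N)) ≤ δ := by
    linarith [dist_triangle_right (a k) (a (φ N)) a₀]
  have hdb : dist (b k) (b (φ N)) ≤ δ := by
    linarith [dist_triangle_right (b k) (b (φ N)) b₀]
  have h5 := dist_iterate_le_of_sum_dist_le hC hP hε₃ (hfar k)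
    (fun j hj => (hnear k j hj).trans_le (min_le_left _ _)) (hsum k) hda
  have h6 := dist_iterate_le_of_sum_dist_le (a := b k) (b := a k) hC hP hε₃
    (by rw [dist_comm]; exact hfar k)
    (fun j hj => by rw [dist_comm]; exact (hnear k j hj).trans_le (min_le_left _ _))
    (by simpa only [dist_comm] using hsum k) hdb
  calc ∑ j ∈ Finset.range T, dist ((g ^ j) (a (φ N))) ((g ^ j) (b (φ N)))
      ≤ ∑ j ∈ Finset.range T, 3 * dist ((g ^ j) (a k)) ((g ^ j) (b k)) := by
        refine Finset.sum_le_sum fun j hj => ?_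
        have hj' : j < k + 1 := by
          have := Finset.mem_range.1 hj
          omega
        have e1 := h5 j hj'
        have e2 := h6 j hj'
        rw [dist_comm ((g ^ j) (b k)) ((g ^ j) (a k))] at e2
        rw [dist_comm] at e1
        linarith [dist_triangle4 ((g ^ j) (a (φ N))) ((g ^ j) (a k)) ((g ^ j) (b k))
          ((g ^ j) (b (φ N)))]
    _ ≤ ∑ j ∈ Finset.range (k + 1), 3 * dist ((g ^ j) (a k)) ((g ^ j) (b k)) :=
        Finset.sum_le_sum_of_subset_of_nonneg (Finset.range_subset_range.2 (by omega))
          fun _ _ _ => by positivity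
    _ ≤ 3 * D := by
        rw [← Finset.mul_sum]
        linarith [hsum k]

/-- For `g ∈ diff^{1+Lip}(K)` there is `N ≥ 1` with
`Per(g) = {p ∈ K : g^N p = p}`. -/
theorem periodic_points_uniform_period (K : Set ℝ) (hK : IsCantorInR K)
    (g : Equiv.Perm K) (hg : MemDiffLip K g) :
    ∃ N : ℕ, 1 ≤ N ∧ ∀ p : K, (∃ n : ℕ, 1 ≤ n ∧ (g ^ n) p = p) ↔ (g ^ N) p = p := by
  obtain ⟨R, hR⟩ := exists_minimalPeriod_le hK.2.1 hg
  refine ⟨R.factorial, R.factorial_pos, fun p => ⟨?_, fun h => ⟨_, R.factorial_pos, h⟩⟩⟩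
  rintro ⟨n, hn, hp⟩
  have hpos : 0 < Function.minimalPeriod g p :=
    Function.IsPeriodicPt.minimalPeriod_pos hn
      (show (g : K → K)^[n] p = p by rwa [Equiv.Perm.iterate_eq_pow])
  rw [← Equiv.Perm.iterate_eq_pow]
  exact Function.isPeriodicPt_iff_minimalPeriod_dvd.2 (Nat.dvd_factorial hpos (hR p))
end
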